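/- arXiv:1706.00645 — 9 statements merged into one kernel-verified Lean document; each statement's English description precedes it below -/
import Mathlib

section
/- Let H be a complex Hilbert space, M : H → H a bounded linear operator, and A : dom(A) ⊆ H → H a densely defined skew-selfadjoint operator (A* = −A). Assume there exists c > 0 such that Re⟨M x, x⟩ ≥ c‖x‖² for all x ∈ H. Then the operator M + A, with domain dom(A), is a bijection from dom(A) onto H, its inverse is a bounded operator on H, and ‖(M + A)⁻¹‖ ≤ 1/c. -/
/-- Let `H` be a complex Hilbert space, `M : H → H` a bounded linear operator,
and `A` a densely defined skew-selfadjoint operator (`A† = -A`). If `Re⟪M x, x⟫ ≥ c‖x‖²` for some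
`c > 0`, then `M + A` (with domain `dom A`) is a bijection from `dom A` onto `H` whose inverse is
a bounded operator of norm at most `1/c`. -/
theorem statement0
    {H : Type*} [NormedAddCommGroup H] [InnerProductSpace ℂ H] [CompleteSpace H]
    (M : H →L[ℂ] H)
    (A : H →ₗ.[ℂ] H) (hA_dense : Dense (A.domain : Set H))
    (hA_skew : A.adjoint = -A)
    (c : ℝ) (hc : 0 < c)
    (hM : ∀ x : H, c * ‖x‖ ^ 2 ≤ (inner ℂ (M x) x : ℂ).re) :
    ∃ B : H →L[ℂ] H, ‖B‖ ≤ 1 / c ∧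
      (∀ x : A.domain, B (M x + A x) = x) ∧
      (∀ y : H, ∃ x : A.domain, M (x : H) + A x = y) := by
  have formal : ∀ x z : A.domain, inner ℂ (A x) (z : H) = - inner ℂ (x : H) (A z) := by
    intro x z
    have h := LinearPMap.adjoint_isFormalAdjoint hA_dense
    rw [hA_skew] at h
    have h1 := h x z
    rw [LinearPMap.neg_apply, inner_neg_left] at h1
    rw [← h1, neg_neg]
  have key : ∀ y w : H, (∀ z : A.domain, inner ℂ w (z : H) = inner ℂ y (A z)) →
      ∃ h : y ∈ A.domain, A ⟨y, h⟩ = -w := by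
    intro y w hw
    have hy : y ∈ A.adjoint.domain := LinearPMap.mem_adjoint_domain_of_exists y ⟨w, hw⟩
    have hy' : y ∈ A.domain := by
      rw [hA_skew] at hy
      exact hy
    refine ⟨hy', ?_⟩
    apply hA_dense.eq_of_inner_left ℂ
    intro v hv
    have h1 := formal ⟨y, hy'⟩ ⟨v, hv⟩
    have h2 := hw ⟨v, hv⟩
    simp only at h1 h2
    rw [h1, inner_neg_left, h2]
  have reA : ∀ x : A.domain, (inner ℂ (A x) (x : H) : ℂ).re = 0 := by
    intro x
    have h1 := congrArg Complex.re (formal x x)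
    have h2 := congrArg Complex.re (inner_conj_symm (𝕜 := ℂ) (x : H) (A x))
    simp only [Complex.neg_re, Complex.conj_re] at h1 h2
    linarith
  let T : A.domain →ₗ[ℂ] H := (M : H →ₗ[ℂ] H).comp A.domain.subtype + A.toFun
  have hT : ∀ x : A.domain, T x = M x + A x := fun x => rfl
  have bound : ∀ x : A.domain, c * ‖(x : H)‖ ≤ ‖T x‖ := by
    intro x
    have h1 : c * ‖(x : H)‖ ^ 2 ≤ ‖T x‖ * ‖(x : H)‖ := by
      have h2 : (inner ℂ (T x) (x : H) : ℂ).re ≤ ‖T x‖ * ‖(x : H)‖ :=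
        (Complex.re_le_norm _).trans (norm_inner_le_norm _ _)
      rw [hT, inner_add_left, Complex.add_re, reA x, ← hT] at h2
      linarith [hM x]
    rcases (norm_nonneg (x : H)).eq_or_lt with h | h
    · rw [← h]; simp
    · nlinarith
  have inj : Function.Injective T := by
    rw [injective_iff_map_eq_zero]
    intro x hx
    have h := bound x
    rw [hx, norm_zero] at h
    have h0 : ‖(x : H)‖ ≤ 0 := by nlinarith
    exact Subtype.ext (norm_le_zero_iff.mp h0)
  have closed : IsClosed (LinearMap.range T : Set H) := by
    apply isClosed_of_closure_subset
    intro y hy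
    obtain ⟨u, hu, hlim⟩ := mem_closure_iff_seq_limit.mp hy
    choose x hx using hu
    have cau : CauchySeq (fun n => (x n : H)) := by
      have hcu := hlim.cauchySeq
      rw [Metric.cauchySeq_iff] at hcu ⊢
      intro ε hε
      obtain ⟨N, hN⟩ := hcu (c * ε) (by positivity)
      refine ⟨N, fun m hm n hn => ?_⟩
      have h1 := hN m hm n hn
      have h2 := bound (x m - x n)
      rw [map_sub, hx, hx] at h2
      rw [dist_eq_norm] at h1 ⊢
      rw [Submodule.coe_sub] at h2
      exact lt_of_mul_lt_mul_left (h2.trans_lt h1) hc.le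
    obtain ⟨a, ha⟩ := cauchySeq_tendsto_of_complete cau
    have hA : Filter.Tendsto (fun n => A (x n)) Filter.atTop (nhds (y - M a)) := by
      have h1 := hlim.sub ((M.continuous.tendsto a).comp ha)
      refine h1.congr fun n => ?_
      simp [← hx, hT]
    obtain ⟨hd, hAa⟩ := key a (-(y - M a)) (by
      intro z
      have h1 := hA.inner (𝕜 := ℂ) (tendsto_const_nhds (x := (z : H)))
      have h2 := (ha.inner (𝕜 := ℂ) (tendsto_const_nhds (x := A z))).neg
      have h3 := tendsto_nhds_unique h1 (h2.congr fun n => (formal (x n) z).symm)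
      rw [inner_neg_left, h3, neg_neg])
    refine ⟨⟨a, hd⟩, ?_⟩
    rw [hT, hAa]
    simp
  have surj : Function.Surjective T := by
    rw [← LinearMap.range_eq_top]
    have : CompleteSpace (LinearMap.range T) := closed.completeSpace_coe
    rw [← Submodule.orthogonal_eq_bot_iff, Submodule.eq_bot_iff]
    intro y hy
    have hy1 : ∀ z : A.domain, inner ℂ y (M z) + inner ℂ y (A z) = 0 := by
      intro z
      rw [← inner_add_right, ← hT]
      exact (Submodule.mem_orthogonal' _ _).mp hy _ ⟨z, rfl⟩
    obtain ⟨hd, _⟩ := key y (-(ContinuousLinearMap.adjoint M y)) (by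
      intro z
      rw [inner_neg_left, ContinuousLinearMap.adjoint_inner_left]
      linear_combination -(hy1 z))
    have h1 := congrArg Complex.re (hy1 ⟨y, hd⟩)
    have h2 := congrArg Complex.re (inner_conj_symm (𝕜 := ℂ) y (A ⟨y, hd⟩))
    have h3 := congrArg Complex.re (inner_conj_symm (𝕜 := ℂ) y (M y))
    have h4 := reA ⟨y, hd⟩
    have h5 := hM y
    simp only [Complex.add_re, Complex.conj_re, Complex.zero_re] at h1 h2 h3 h4
    have h6 : ‖y‖ ^ 2 ≤ 0 := by
      by_contra! h
      nlinarith
    have h7 : ‖y‖ = 0 := by nlinarith [norm_nonneg y]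
    exact norm_eq_zero.mp h7
  let e := LinearEquiv.ofBijective T ⟨inj, surj⟩
  have he : ∀ x, e x = T x := fun x => rfl
  refine ⟨LinearMap.mkContinuous (A.domain.subtype.comp (e.symm : H →ₗ[ℂ] A.domain)) (1 / c) ?_,
    LinearMap.mkContinuous_norm_le _ (by positivity) _, ?_, surj⟩
  · intro y
    have h := bound (e.symm y)
    rw [← he, LinearEquiv.apply_symm_apply] at h
    rw [one_div, inv_mul_eq_div, le_div_iff₀ hc, mul_comm]
    exact h
  · intro x
    rw [← hT, ← he]
    simp
end

section
/- Let H be a complex Hilbert space and A : dom(A) ⊆ H → H a densely defined skew-selfadjoint operator (A* = −A). Let U ⊆ H be a closed subspace with orthogonal projection π_U, set V := U^⊥ with π_V = 1 − π_U, and let ι_U : U → H, ι_V : V → H be the inclusion maps. Assume π_U A ⊆ A π_U and that A π_V is bounded (i.e. V ⊆ dom(A) and the restriction of A to V is a bounded operator). Then the compression ι_U* A ι_U, with domain dom(A) ∩ U, is skew-selfadjoint as an operator in U, and the bounded operator ι_V* A ι_V is skew-selfadjoint in V. -/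
open scoped InnerProductSpace

variable {H : Type*} [NormedAddCommGroup H] [InnerProductSpace ℂ H] [CompleteSpace H]

/-- The compression `ι_U* A ι_U` of an operator `A : dom(A) ⊆ H → H` to a closed subspace
`U ⊆ H`, with domain `dom(A) ∩ U`, given by `u ↦ ι_U* (A u) = orthogonalProjection U (A u)`. -/
noncomputable def LinearPMap.compress (A : H →ₗ.[ℂ] H) (U : Submodule ℂ H) [CompleteSpace U] :
    U →ₗ.[ℂ] U where
  domain := A.domain.comap U.subtype
  toFun := (Submodule.orthogonalProjectionOnto U).toLinearMap.comp
    (A.toFun.comp (U.subtype.restrict (q := A.domain) fun _ hx => hx))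

theorem compress_skew_aux
    (A : H →ₗ.[ℂ] H) (hA_dense : Dense (A.domain : Set H))
    (hA_skew : A.adjoint = -A)
    (U : Submodule ℂ H) [CompleteSpace U]
    (hU : ∀ x : A.domain,
      ∃ hx : ((Submodule.orthogonalProjectionOnto U (x : H) : H)) ∈ A.domain,
        (Submodule.orthogonalProjectionOnto U (A x) : H) = A ⟨(Submodule.orthogonalProjectionOnto U (x : H) : H), hx⟩) :
    (A.compress U).adjoint = -(A.compress U) := by
  have happ : ∀ x : (A.compress U).domain,
      (A.compress U) x = Submodule.orthogonalProjectionOnto U (A ⟨((x : U) : H), x.2⟩) :=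
    fun x => rfl
  have hproj : ∀ (y : U) (z : H),
      ⟪y, Submodule.orthogonalProjectionOnto U z⟫_ℂ = ⟪(y : H), z⟫_ℂ := by
    intro y z
    simp
  have hproj' : ∀ (y : U) (z : H),
      ⟪Submodule.orthogonalProjectionOnto U z, y⟫_ℂ = ⟪z, (y : H)⟫_ℂ := by
    intro y z
    simp
  have hsk : ∀ x y : A.domain, ⟪-(A x), (y : H)⟫_ℂ = ⟪(x : H), A y⟫_ℂ := by
    have h := LinearPMap.adjoint_isFormalAdjoint hA_dense
    rw [hA_skew] at h
    intro x y
    exact h x y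
  have hdense : Dense ((A.compress U).domain : Set U) := by
    have hs : Function.Surjective (Submodule.orthogonalProjectionOnto U) := fun u =>
      ⟨u, by simp⟩
    have h := hs.denseRange.dense_image
      (Submodule.orthogonalProjectionOnto U).continuous hA_dense
    refine h.mono ?_
    rintro _ ⟨x, hx, rfl⟩
    exact (hU ⟨x, hx⟩).1
  have hle : -(A.compress U) ≤ (A.compress U).adjoint := by
    refine LinearPMap.IsFormalAdjoint.le_adjoint hdense ?_
    refine LinearPMap.IsFormalAdjoint.symm ?_
    intro x y
    rw [LinearPMap.neg_apply, happ, happ, hproj, inner_neg_left, hproj']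
    rw [← inner_neg_left]
    exact hsk ⟨((x : U) : H), x.2⟩ ⟨((y : U) : H), y.2⟩
  refine (LinearPMap.eq_of_le_of_domain_eq hle (le_antisymm hle.1 ?_)).symm
  intro y hy
  have hy2 : (y : H) ∈ A.adjoint.domain := by
    refine LinearPMap.mem_adjoint_domain_of_exists _
      ⟨((A.compress U).adjoint ⟨y, hy⟩ : U), fun x => ?_⟩
    obtain ⟨hx, he⟩ := hU x
    have h := LinearPMap.adjoint_isFormalAdjoint hdense ⟨y, hy⟩
      ⟨Submodule.orthogonalProjectionOnto U (x : H), hx⟩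
    rw [happ, hproj, hproj] at h
    rw [h, ← he]
    change ⟪(y : H), _⟫_ℂ = _
    rw [← Submodule.coe_inner, hproj]
  rw [hA_skew] at hy2
  exact hy2

/-- Let `A` be a densely defined skew-selfadjoint operator (`A† = -A`) on a
complex Hilbert space `H`, `U ⊆ H` a closed subspace, `V := Uᗮ`.  Assume `π_U A ⊆ A π_U` and
that `A π_V` is bounded (`V ⊆ dom A` and `A` is bounded on `V`).  Then the compressions
`ι_U* A ι_U` (with domain `dom(A) ∩ U`) and `ι_V* A ι_V` are skew-selfadjoint in `U` resp. `V`. -/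
theorem statement2
    (A : H →ₗ.[ℂ] H) (hA_dense : Dense (A.domain : Set H))
    (hA_skew : A.adjoint = -A)
    (U : Submodule ℂ H) [CompleteSpace U]
    (hU : ∀ x : A.domain,
      ∃ hx : ((Submodule.orthogonalProjectionOnto U (x : H) : H)) ∈ A.domain,
        (Submodule.orthogonalProjectionOnto U (A x) : H) = A ⟨(Submodule.orthogonalProjectionOnto U (x : H) : H), hx⟩)
    (hV_sub : Uᗮ ≤ A.domain)
    (hV_bdd : ∃ C : ℝ, ∀ x : A.domain, (x : H) ∈ Uᗮ → ‖A x‖ ≤ C * ‖(x : H)‖) :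
    (A.compress U).adjoint = -(A.compress U) ∧
    (A.compress Uᗮ).adjoint = -(A.compress Uᗮ) := by
  refine ⟨compress_skew_aux A hA_dense hA_skew U hU,
    compress_skew_aux A hA_dense hA_skew Uᗮ ?_⟩
  intro x
  obtain ⟨hx, he⟩ := hU x
  have hv : ∀ z : H, (Submodule.orthogonalProjectionOnto Uᗮ z : H)
      = z - (Submodule.orthogonalProjectionOnto U z : H) := by
    intro z
    exact Submodule.starProjection_orthogonal_val z
  have hm : (Submodule.orthogonalProjectionOnto Uᗮ (x : H) : H) ∈ A.domain :=
    hV_sub (Submodule.coe_mem _)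
  refine ⟨hm, ?_⟩
  rw [hv, he, ← LinearPMap.map_sub]
  congr 1
  exact Subtype.ext (hv x).symm
end

section
/- Assume Hypothesis (H). Let ε₀ := 1/(2 C_R ‖M‖). Then for every ε ∈ (0, ε₀), the operator B_{ε,R} := ι_R* M ι_R + ε⁻¹ ι_R* A ι_R, with domain dom(A) ∩ R, is a bijection from its domain onto R with bounded inverse, and ‖B_{ε,R}⁻¹‖ ≤ 2 C_R ε. -/
/-- Under Hypothesis (H), for every `ε ∈ (0, 1/(2 C_R ‖M‖))` the operator
`B_{ε,R} = ι_R* M ι_R + ε⁻¹ ι_R* A ι_R` with domain `dom(A) ∩ R` is a bijection onto `R`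
with bounded inverse of norm at most `2 C_R ε`. -/
theorem statement3
    {H : Type*} [NormedAddCommGroup H] [InnerProductSpace ℂ H] [CompleteSpace H]
    -- `M` is a bounded operator with `Re⟪M x, x⟫ ≥ c ‖x‖²`, `c > 0`
    (M : H →L[ℂ] H) (c : ℝ) (hc : 0 < c)
    (hM : ∀ x : H, c * ‖x‖ ^ 2 ≤ (inner ℂ (M x) x : ℂ).re)
    -- `A` is densely defined and skew-selfadjoint
    (A : H →ₗ.[ℂ] H) (hA_dense : Dense (A.domain : Set H)) (hA_skew : A.adjoint = -A)
    -- `N` is a closed subspace, `R = Nᗮ`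
    (N : Submodule ℂ H) [CompleteSpace N]
    (C_R : ℝ) (hC_R : 0 < C_R)
    -- Hypothesis (H)(a): `N ⊆ dom A` and `A π_N` is bounded
    (hHa_sub : N ≤ A.domain)
    (hHa_bdd : ∃ Ca : ℝ, ∀ x : A.domain, (x : H) ∈ N → ‖A x‖ ≤ Ca * ‖(x : H)‖)
    -- Hypothesis (H)(b): `π_R A ⊆ A π_R`
    (hHb : ∀ x : A.domain,
      ∃ hx : ((Submodule.orthogonalProjection Nᗮ (x : H) : H)) ∈ A.domain,
        (Submodule.orthogonalProjection Nᗮ (A x) : H)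
          = A ⟨(Submodule.orthogonalProjection Nᗮ (x : H) : H), hx⟩)
    -- Hypothesis (H)(c): the compression `ι_R* A ι_R`, with domain `dom(A) ∩ R`, is a
    -- bijection onto `R` with bounded inverse of norm at most `C_R`
    (hHc : ∃ J : Nᗮ →L[ℂ] Nᗮ, ‖J‖ ≤ C_R ∧
      (∀ (x : A.domain) (hx : (x : H) ∈ Nᗮ),
        J (Submodule.orthogonalProjection Nᗮ (A x)) = ⟨(x : H), hx⟩) ∧
      (∀ y : Nᗮ, ∃ (x : A.domain) (hx : (x : H) ∈ Nᗮ),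
        Submodule.orthogonalProjection Nᗮ (A x) = y))
    (ε : ℝ) (hε : ε ∈ Set.Ioo (0 : ℝ) (1 / (2 * C_R * ‖M‖))) :
    ∃ J : Nᗮ →L[ℂ] Nᗮ, ‖J‖ ≤ 2 * C_R * ε ∧
      (∀ (x : A.domain) (hx : (x : H) ∈ Nᗮ),
        J (Submodule.orthogonalProjection Nᗮ (M (x : H)) + ε⁻¹ • Submodule.orthogonalProjection Nᗮ (A x))
          = ⟨(x : H), hx⟩) ∧
      (∀ y : Nᗮ, ∃ (x : A.domain) (hx : (x : H) ∈ Nᗮ),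
        Submodule.orthogonalProjection Nᗮ (M (x : H)) + ε⁻¹ • Submodule.orthogonalProjection Nᗮ (A x) = y) := by
  obtain ⟨J, hJn, hJl, hJs⟩ := hHc
  obtain ⟨hε0, hε1⟩ := hε
  have hsmall : ε * (C_R * ‖M‖) ≤ 1 / 2 := by
    rcases (norm_nonneg M).eq_or_lt with h | h
    · rw [← h]; norm_num
    · rw [lt_div_iff₀ (by positivity)] at hε1
      linarith
  let P : H →L[ℂ] Nᗮ := Submodule.orthogonalProjection Nᗮ
  have hP : ∀ x, Submodule.orthogonalProjection Nᗮ x = P x := fun _ => rfl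
  simp only [hP] at hJl hJs ⊢
  let T : Nᗮ →L[ℂ] Nᗮ := J.comp (P.comp (M.comp (Nᗮ).subtypeL))
  have hT : ∀ v : Nᗮ, T v = J (P (M (v : H))) := fun _ => rfl
  have hTb : ∀ v : Nᗮ, ‖T v‖ ≤ C_R * ‖M‖ * ‖v‖ := by
    intro v
    rw [hT]
    calc ‖J (P (M (v : H)))‖ ≤ ‖J‖ * ‖P (M (v : H))‖ := J.le_opNorm _
      _ ≤ C_R * (‖M‖ * ‖v‖) := by
        have h1 : ‖P (M (v : H))‖ ≤ ‖M (v : H)‖ := Submodule.norm_orthogonalProjection_apply_le _ _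
        have h2 : ‖M (v : H)‖ ≤ ‖M‖ * ‖v‖ := M.le_opNorm _
        exact mul_le_mul hJn (h1.trans h2) (norm_nonneg _) hC_R.le
      _ = _ := by ring
  let S : Nᗮ →L[ℂ] Nᗮ := (-(ε : ℂ)) • T
  have hS : ∀ v, S v = -((ε : ℂ) • T v) := fun v => by simp [S]
  have hSb : ∀ v : Nᗮ, ‖S v‖ ≤ 1 / 2 * ‖v‖ := by
    intro v
    rw [hS, norm_neg, norm_smul, Complex.norm_real, Real.norm_of_nonneg hε0.le]
    calc ε * ‖T v‖ ≤ ε * (C_R * ‖M‖ * ‖v‖) := by gcongr; exact hTb v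
      _ = ε * (C_R * ‖M‖) * ‖v‖ := by ring
      _ ≤ _ := by gcongr
  have hSn : ‖S‖ < 1 :=
    (ContinuousLinearMap.opNorm_le_bound _ (by norm_num) hSb).trans_lt (by norm_num)
  let U := Units.oneSub S hSn
  let K : Nᗮ →L[ℂ] Nᗮ := ((U⁻¹ : (Nᗮ →L[ℂ] Nᗮ)ˣ) : Nᗮ →L[ℂ] Nᗮ)
  have hK1 : ∀ v, K (v - S v) = v := fun v => by
    have h : K * (1 - S) = 1 := U.inv_mul
    simpa using congrArg (fun f : Nᗮ →L[ℂ] Nᗮ => f v) h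
  have hK2 : ∀ v, K v - S (K v) = v := fun v => by
    have h : (1 - S) * K = 1 := U.mul_inv
    simpa using congrArg (fun f : Nᗮ →L[ℂ] Nᗮ => f v) h
  have hKb : ∀ v, ‖K v‖ ≤ 2 * ‖v‖ := by
    intro v
    have h1 : ‖K v‖ - ‖S (K v)‖ ≤ ‖v‖ := by
      have := norm_sub_norm_le (K v) (S (K v))
      rwa [hK2] at this
    have := hSb (K v)
    linarith
  have hεc : (ε : ℂ) ≠ 0 := by exact_mod_cast hε0.ne'
  have hsm : ∀ w : Nᗮ, ε⁻¹ • w = (ε : ℂ)⁻¹ • w := fun w => by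
    rw [← Complex.ofReal_inv]; rfl
  simp only [hsm]
  refine ⟨(ε : ℂ) • K.comp J, ?_, ?_, ?_⟩
  · refine ContinuousLinearMap.opNorm_le_bound _ (by positivity) fun v => ?_
    have e : ((ε : ℂ) • K.comp J) v = (ε : ℂ) • K (J v) := rfl
    rw [e, norm_smul, Complex.norm_real, Real.norm_of_nonneg hε0.le]
    calc ε * ‖K (J v)‖ ≤ ε * (2 * (C_R * ‖v‖)) := by
          gcongr
          refine (hKb _).trans ?_
          gcongr
          exact (J.le_opNorm v).trans (by gcongr)
      _ = _ := by ring
  · intro x hx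
    have e : ∀ v, ((ε : ℂ) • K.comp J) v = K ((ε : ℂ) • J v) := fun v => by simp
    rw [e, map_add, J.map_smul, hJl x hx, smul_add, smul_inv_smul₀ hεc]
    have h := hK1 ⟨(x : H), hx⟩
    rw [hS, hT, sub_neg_eq_add, add_comm] at h
    exact h
  · intro y
    let z : Nᗮ := K ((ε : ℂ) • J y)
    have hz : z + (ε : ℂ) • J (P (M (z : H))) = (ε : ℂ) • J y := by
      have h := hK2 ((ε : ℂ) • J y)
      rw [hS, sub_neg_eq_add] at h
      exact h
    obtain ⟨x, hx, hxy⟩ := hJs ((ε : ℂ) • (y - P (M (z : H))))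
    have hxz : (⟨(x : H), hx⟩ : Nᗮ) = z := by
      rw [← hJl x hx, hxy, map_smul, map_sub, smul_sub, ← hz, add_sub_cancel_right]
    have hxz' : (x : H) = z := congrArg Subtype.val hxz
    refine ⟨x, hx, ?_⟩
    rw [hxy, hxz', inv_smul_smul₀ hεc, add_sub_cancel]
end

section
/- Assume Hypothesis (H) and let ε₀ := 1/(2 C_R ‖M‖). Then for every ε ∈ (0, ε₀), the operator B_ε := M + ε⁻¹ A (with domain dom(A)) is boundedly invertible and the identity π_N B_ε⁻¹ = ι_N B_{ε,N}⁻¹ ( ι_N* − ι_N* M π_R B_ε⁻¹ ) holds as an identity of bounded operators from H to H. -/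
/-- A bounded-below operator between Hilbert spaces whose range has trivial orthogonal complement
has a bounded two-sided inverse. -/
theorem exists_inverse_aux {E F : Type*} [NormedAddCommGroup E] [NormedSpace ℂ E] [CompleteSpace E]
    [NormedAddCommGroup F] [InnerProductSpace ℂ F] [CompleteSpace F]
    (T : E →L[ℂ] F) (K : ℝ) (hK : 0 ≤ K) (hT : ∀ x, ‖x‖ ≤ K * ‖T x‖)
    (hr : ∀ z : F, (∀ x, inner ℂ (T x) z = 0) → z = 0) :
    ∃ S : F →L[ℂ] E, (∀ x, S (T x) = x) ∧ (∀ y, T (S y) = y) := by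
  have hanti : AntilipschitzWith ⟨K, hK⟩ T :=
    ContinuousLinearMap.antilipschitz_of_bound T (K := ⟨K, hK⟩) (fun x => hT x)
  have hcl : IsClosed (Set.range T) := hanti.isClosed_range T.uniformContinuous
  have hker : T.ker = ⊥ := LinearMap.ker_eq_bot.mpr hanti.injective
  have hran : T.range = ⊤ := by
    have hcl' : IsClosed (T.range : Set F) := by
      have e : (T.range : Set F) = Set.range T := by
        ext y
        exact Iff.rfl
      rw [e]
      exact hcl
    have : CompleteSpace T.range := hcl'.completeSpace_coe
    rw [← Submodule.orthogonal_eq_bot_iff, Submodule.eq_bot_iff]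
    intro z hz
    apply hr
    intro x
    exact (Submodule.mem_orthogonal _ _).1 hz (T x) ⟨x, rfl⟩
  exact ⟨(ContinuousLinearEquiv.ofBijective T hker hran).symm,
    fun x => ContinuousLinearEquiv.ofBijective_symm_apply_apply T hker hran x,
    fun y => ContinuousLinearEquiv.ofBijective_apply_symm_apply T hker hran y⟩

/-- Coercivity gives a lower bound. -/
theorem coercive_bound_aux {F : Type*} [NormedAddCommGroup F] [InnerProductSpace ℂ F]
    (c : ℝ) (hc : 0 < c) (x y : F) (h : c * ‖x‖ ^ 2 ≤ (inner ℂ y x : ℂ).re) :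
    ‖x‖ ≤ c⁻¹ * ‖y‖ := by
  have h1 : (inner ℂ y x : ℂ).re ≤ ‖y‖ * ‖x‖ :=
    (Complex.re_le_norm _).trans (norm_inner_le_norm y x)
  rcases (norm_nonneg x).eq_or_lt with h0 | h0
  · rw [← h0]; positivity
  · rw [le_inv_mul_iff₀ hc]
    have : (c * ‖x‖) * ‖x‖ ≤ ‖y‖ * ‖x‖ := by nlinarith
    exact le_of_mul_le_mul_right this h0

theorem coercive_zero_aux {F : Type*} [NormedAddCommGroup F] [InnerProductSpace ℂ F]
    (c : ℝ) (hc : 0 < c) (x y : F) (h : c * ‖x‖ ^ 2 ≤ (inner ℂ y x : ℂ).re)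
    (h0 : inner ℂ y x = 0) : x = 0 := by
  rw [h0] at h
  have : ‖x‖ ^ 2 ≤ 0 := by
    by_contra hh
    push Not at hh
    have := mul_pos hc hh
    simp at h
    linarith
  have h2 : ‖x‖ ^ 2 = 0 := le_antisymm this (by positivity)
  simpa using h2

/-- Under Hypothesis (H), for every `ε ∈ (0, 1/(2 C_R ‖M‖))` the operator
`B_ε = M + ε⁻¹ A` (domain `dom A`) is boundedly invertible, and
`π_N B_ε⁻¹ = ι_N B_{ε,N}⁻¹ (ι_N* − ι_N* M π_R B_ε⁻¹)`, where `B_{ε,N}⁻¹` is the (unique,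
bounded) inverse of `B_{ε,N} = ι_N* M ι_N + ε⁻¹ ι_N* A ι_N` on `N`. -/
theorem statement5
    {H : Type*} [NormedAddCommGroup H] [InnerProductSpace ℂ H] [CompleteSpace H]
    -- `M` is a bounded operator with `Re⟪M x, x⟫ ≥ c ‖x‖²`, `c > 0`
    (M : H →L[ℂ] H) (c : ℝ) (hc : 0 < c)
    (hM : ∀ x : H, c * ‖x‖ ^ 2 ≤ (inner ℂ (M x) x : ℂ).re)
    -- `A` is densely defined and skew-selfadjoint
    (A : H →ₗ.[ℂ] H) (hA_dense : Dense (A.domain : Set H)) (hA_skew : A.adjoint = -A)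
    -- `N` is a closed subspace, `R = Nᗮ`
    (N : Submodule ℂ H) [CompleteSpace N]
    (C_R : ℝ) (hC_R : 0 < C_R)
    -- Hypothesis (H)(a): `N ⊆ dom A` and `A π_N` is bounded
    (hHa_sub : N ≤ A.domain)
    (hHa_bdd : ∃ Ca : ℝ, ∀ x : A.domain, (x : H) ∈ N → ‖A x‖ ≤ Ca * ‖(x : H)‖)
    -- Hypothesis (H)(b): `π_R A ⊆ A π_R`
    (hHb : ∀ x : A.domain,
      ∃ hx : ((Submodule.orthogonalProjectionOnto Nᗮ (x : H) : H)) ∈ A.domain,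
        (Submodule.orthogonalProjectionOnto Nᗮ (A x) : H)
          = A ⟨(Submodule.orthogonalProjectionOnto Nᗮ (x : H) : H), hx⟩)
    -- Hypothesis (H)(c): the compression `ι_R* A ι_R`, with domain `dom(A) ∩ R`, is a
    -- bijection onto `R` with bounded inverse of norm at most `C_R`
    (hHc : ∃ J : Nᗮ →L[ℂ] Nᗮ, ‖J‖ ≤ C_R ∧
      (∀ (x : A.domain) (hx : (x : H) ∈ Nᗮ),
        J (Submodule.orthogonalProjectionOnto Nᗮ (A x)) = ⟨(x : H), hx⟩) ∧
      (∀ y : Nᗮ, ∃ (x : A.domain) (hx : (x : H) ∈ Nᗮ),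
        Submodule.orthogonalProjectionOnto Nᗮ (A x) = y))
    (ε : ℝ) (hε : ε ∈ Set.Ioo (0 : ℝ) (1 / (2 * C_R * ‖M‖))) :
    ∃ (Binv : H →L[ℂ] H) (JN : N →L[ℂ] N),
      -- `Binv` is the bounded inverse of `B_ε = M + ε⁻¹ A`
      (∀ x : A.domain, Binv (M (x : H) + ε⁻¹ • A x) = x) ∧
      (∀ y : H, ∃ x : A.domain, M (x : H) + ε⁻¹ • A x = y) ∧
      -- `JN` is the bounded inverse of `B_{ε,N}`
      (∀ x : N,
        JN (Submodule.orthogonalProjectionOnto N (M (x : H))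
            + ε⁻¹ • Submodule.orthogonalProjectionOnto N (A ⟨(x : H), hHa_sub x.2⟩)) = x) ∧
      (∀ y : N, ∃ x : N,
        Submodule.orthogonalProjectionOnto N (M (x : H))
            + ε⁻¹ • Submodule.orthogonalProjectionOnto N (A ⟨(x : H), hHa_sub x.2⟩) = y) ∧
      -- the identity `π_N B_ε⁻¹ = ι_N B_{ε,N}⁻¹ (ι_N* − ι_N* M π_R B_ε⁻¹)`
      (∀ y : H, (Submodule.orthogonalProjectionOnto N (Binv y) : H)
          = (JN (Submodule.orthogonalProjectionOnto N y
              - Submodule.orthogonalProjectionOnto N (M ((Submodule.orthogonalProjectionOnto Nᗮ (Binv y) : H)))) : H)) := by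
  obtain ⟨hε0, -⟩ := hε
  -- skew symmetry
  have hskew : ∀ x y : A.domain, inner ℂ (A x) (y : H) = - inner ℂ (x : H) (A y) := by
    have h := LinearPMap.adjoint_isFormalAdjoint hA_dense
    rw [hA_skew] at h
    intro x y
    have h' := h x y
    rw [LinearPMap.neg_apply, inner_neg_left] at h'
    rw [← h', neg_neg]
  have hre : ∀ x : A.domain, (inner ℂ (A x) (x : H) : ℂ).re = 0 := by
    intro x
    have h1 := congrArg Complex.re (hskew x x)
    have h2 : (inner ℂ (x : H) (A x) : ℂ).re = (inner ℂ (A x) (x : H) : ℂ).re :=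
      inner_re_symm (𝕜 := ℂ) _ _
    rw [Complex.neg_re, h2] at h1
    linarith
  have hclosed : IsClosed (A.graph : Set (H × H)) := by
    have h := LinearPMap.adjoint_isClosed hA_dense
    rw [hA_skew] at h
    have h' : IsClosed (((-A).graph : Submodule ℂ (H × H)) : Set (H × H)) := h
    have heq : (A.graph : Set (H × H)) = (fun p : H × H => (p.1, -p.2)) ⁻¹' ((-A).graph : Set (H × H)) := by
      ext p
      simp only [Set.mem_preimage, SetLike.mem_coe, LinearPMap.mem_graph_iff]
      constructor
      · rintro ⟨y, h1, h2⟩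
        exact ⟨y, h1, by rw [LinearPMap.neg_apply, h2]⟩
      · rintro ⟨y, h1, h2⟩
        refine ⟨y, h1, ?_⟩
        rw [LinearPMap.neg_apply] at h2
        exact neg_injective h2
    rw [heq]
    exact h'.preimage (by fun_prop)
  have : CompleteSpace A.graph := hclosed.completeSpace_coe
  have hco : ∀ x : A.domain,
      c * ‖(x : H)‖ ^ 2 ≤ (inner ℂ (M (x : H) + ((ε⁻¹ : ℝ) : ℂ) • A x) (x : H) : ℂ).re := by
    intro x
    rw [inner_add_left, inner_smul_left, Complex.conj_ofReal, Complex.add_re,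
      Complex.re_ofReal_mul, hre, mul_zero, add_zero]
    exact hM x
  let T : A.graph →L[ℂ] H :=
    M ∘L (ContinuousLinearMap.fst ℂ H H) ∘L A.graph.subtypeL +
      ((ε⁻¹ : ℝ) : ℂ) • ((ContinuousLinearMap.snd ℂ H H) ∘L A.graph.subtypeL)
  have hTx : ∀ p : A.graph, T p = M (p : H × H).1 + ((ε⁻¹ : ℝ) : ℂ) • (p : H × H).2 :=
    fun p => rfl
  have hT1 : ∀ p : A.graph, ‖(p : H × H).1‖ ≤ c⁻¹ * ‖T p‖ := by
    rintro ⟨⟨a, b⟩, hp⟩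
    obtain ⟨x, h1, h2⟩ := (LinearPMap.mem_graph_iff A).1 hp
    simp only at h1 h2
    subst h1 h2
    exact coercive_bound_aux c hc _ _ (hco x)
  have hT2 : ∀ p : A.graph, ‖(p : H × H).2‖ ≤ (ε * (1 + ‖M‖ * c⁻¹)) * ‖T p‖ := by
    intro p
    have e : (p : H × H).2 = (ε : ℂ) • (T p - M (p : H × H).1) := by
      rw [hTx, add_sub_cancel_left, smul_smul, ← Complex.ofReal_mul, mul_inv_cancel₀ hε0.ne',
        Complex.ofReal_one, one_smul]
    have n1 : ‖(p : H × H).2‖ = ε * ‖T p - M (p : H × H).1‖ := by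
      conv_lhs => rw [e]
      rw [norm_smul, Complex.norm_real, Real.norm_of_nonneg hε0.le]
    have n2 : ‖M (p : H × H).1‖ ≤ ‖M‖ * (c⁻¹ * ‖T p‖) :=
      (M.le_opNorm _).trans (mul_le_mul_of_nonneg_left (hT1 p) (norm_nonneg _))
    have n3 := norm_sub_le (T p) (M (p : H × H).1)
    rw [n1, mul_assoc]
    apply mul_le_mul_of_nonneg_left _ hε0.le
    linarith
  obtain ⟨S, hS1, hS2⟩ := exists_inverse_aux T (c⁻¹ + ε * (1 + ‖M‖ * c⁻¹)) (by positivity)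
    (by
      intro p
      have a1 : 0 ≤ c⁻¹ * ‖T p‖ := by positivity
      have a2 : 0 ≤ (ε * (1 + ‖M‖ * c⁻¹)) * ‖T p‖ := by positivity
      have : ‖p‖ = max ‖(p : H × H).1‖ ‖(p : H × H).2‖ := rfl
      rw [this, add_mul]
      exact max_le (by linarith [hT1 p]) (by linarith [hT2 p]))
    (by
      intro z hz
      have hz' : ∀ x : A.domain, inner ℂ (M (x : H) + ((ε⁻¹ : ℝ) : ℂ) • A x) z = 0 :=
        fun x => hz ⟨((x : H), A x), LinearPMap.mem_graph A x⟩
      have hzd : z ∈ A.adjoint.domain := by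
        apply LinearPMap.mem_adjoint_domain_of_exists
        refine ⟨-((ε : ℂ) • (ContinuousLinearMap.adjoint M z)), fun x => ?_⟩
        have h := congrArg (starRingEnd ℂ) (hz' x)
        rw [inner_conj_symm, map_zero, inner_add_right, inner_smul_right] at h
        rw [inner_neg_left, inner_smul_left, Complex.conj_ofReal,
          ContinuousLinearMap.adjoint_inner_left]
        have e1 : (ε : ℂ) * ((ε⁻¹ : ℝ) : ℂ) = 1 := by
          rw [← Complex.ofReal_mul, mul_inv_cancel₀ hε0.ne', Complex.ofReal_one]
        linear_combination (-(ε : ℂ)) * h + inner ℂ z (A x) * e1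
      rw [hA_skew] at hzd
      have hzd' : z ∈ A.domain := hzd
      exact coercive_zero_aux c hc z _ (hco ⟨z, hzd'⟩) (hz' ⟨z, hzd'⟩))
  obtain ⟨Ca, hCa⟩ := hHa_bdd
  let AN : N →L[ℂ] H := LinearMap.mkContinuous (A.toFun ∘ₗ Submodule.inclusion hHa_sub) Ca
    (fun x => hCa ⟨x, hHa_sub x.2⟩ x.2)
  have hAN : ∀ x : N, AN x = A ⟨(x : H), hHa_sub x.2⟩ := fun x => rfl
  let D : N →L[ℂ] N := (Submodule.orthogonalProjectionOnto N) ∘L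
    (M ∘L N.subtypeL + ((ε⁻¹ : ℝ) : ℂ) • AN)
  have hD : ∀ x : N, D x = Submodule.orthogonalProjectionOnto N (M (x : H))
      + ε⁻¹ • Submodule.orthogonalProjectionOnto N (A ⟨(x : H), hHa_sub x.2⟩) := by
    intro x
    have : D x = Submodule.orthogonalProjectionOnto N
      (M (x : H) + ((ε⁻¹ : ℝ) : ℂ) • A ⟨(x : H), hHa_sub x.2⟩) := rfl
    rw [this, map_add, map_smul, Complex.coe_smul]
  have hDco : ∀ x : N, c * ‖x‖ ^ 2 ≤ (inner ℂ (D x) x : ℂ).re := by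
    intro x
    have h := hco ⟨x, hHa_sub x.2⟩
    have e : inner ℂ (D x) x =
        inner ℂ (M (x : H) + ((ε⁻¹ : ℝ) : ℂ) • A ⟨(x : H), hHa_sub x.2⟩) (x : H) :=
      Submodule.inner_orthogonalProjectionOnto_eq_of_mem_right x _
    rw [e]
    exact h
  obtain ⟨JN, hJ1, hJ2⟩ := exists_inverse_aux D c⁻¹ (by positivity)
    (fun x => coercive_bound_aux c hc _ _ (hDco x))
    (fun z hz => coercive_zero_aux c hc z _ (hDco z) (hz z))
  have key : ∀ y : H, ∃ x : A.domain, (x : H) = (S y : H × H).1 ∧ M (x : H) + ε⁻¹ • A x = y := by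
    intro y
    obtain ⟨x, h1, h2⟩ := (LinearPMap.mem_graph_iff A).1 (S y).2
    refine ⟨x, h1, ?_⟩
    rw [h1, h2, ← Complex.coe_smul, ← hTx, hS2]
  refine ⟨(ContinuousLinearMap.fst ℂ H H) ∘L A.graph.subtypeL ∘L S, JN, ?_, ?_, ?_, ?_, ?_⟩
  · intro x
    have h := hS1 ⟨((x : H), A x), LinearPMap.mem_graph A x⟩
    rw [hTx, Complex.coe_smul] at h
    exact congrArg (fun p : A.graph => (p : H × H).1) h
  · intro y
    obtain ⟨x, -, hx⟩ := key y
    exact ⟨x, hx⟩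
  · intro x
    rw [← hD, hJ1]
  · intro y
    exact ⟨JN y, by rw [← hD, hJ2]⟩
  · intro y
    obtain ⟨x, hx1, hx2⟩ := key y
    have hB : ((ContinuousLinearMap.fst ℂ H H) ∘L A.graph.subtypeL ∘L S) y = (x : H) := hx1.symm
    rw [hB]
    obtain ⟨hr, hAr⟩ := hHb x
    set n := Submodule.orthogonalProjectionOnto N (x : H) with hn
    set r := Submodule.orthogonalProjectionOnto Nᗮ (x : H) with hrdef
    have hsum : (x : H) = (n : H) + (r : H) := by
      have h : (r : H) = (x : H) - (n : H) := Submodule.starProjection_orthogonal_val (K := N) (x : H)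
      rw [h, add_sub_cancel]
    have hAx : A x = A ⟨(n : H), hHa_sub n.2⟩ + A ⟨(r : H), hr⟩ := by
      rw [← A.map_add]
      congr 1
      exact Subtype.ext hsum
    have hPr : Submodule.orthogonalProjectionOnto N (A ⟨(r : H), hr⟩) = 0 := by
      rw [← hAr]
      exact Submodule.orthogonalProjectionOnto_apply_of_mem_orthogonal
        (Subtype.prop _)
    have hfin : Submodule.orthogonalProjectionOnto N y
        - Submodule.orthogonalProjectionOnto N (M (r : H)) = D n := by
      have hMx : M (x : H) = M (n : H) + M (r : H) := by rw [← map_add, ← hsum]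
      rw [hD, ← hx2, ← Complex.coe_smul, hMx, hAx, map_add, map_add, map_smul, map_add, hPr,
        add_zero, Complex.coe_smul]
      abel
    rw [hfin, hJ1]
end

section
/- Assume Hypothesis (H) and let ε₀ := 1/(2 C_R ‖M‖). Then for every ε ∈ (0, ε₀), the operator B_ε := M + ε⁻¹ A (with domain dom(A)) is boundedly invertible, the operator B_{ε,R} := ι_R* M ι_R + ε⁻¹ ι_R* A ι_R (with domain dom(A) ∩ R) is boundedly invertible, and the identity π_R B_ε⁻¹ = ι_R B_{ε,R}⁻¹ ( ι_R* − ι_R* M π_N B_ε⁻¹ ) holds as an identity of bounded operators from H to H. -/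
theorem norm_smul_clm_le {E : Type*} [NormedAddCommGroup E] [NormedSpace ℂ E]
    (ε : ℝ) (hε : 0 ≤ ε) (K : E →L[ℂ] E) : ‖(ε : ℂ) • K‖ ≤ ε * ‖K‖ := by
  rw [norm_smul, Complex.norm_real, Real.norm_of_nonneg hε]

theorem isUnit_one_add_clm {E : Type*} [NormedAddCommGroup E] [NormedSpace ℂ E] [CompleteSpace E]
    (K : E →L[ℂ] E) (hK : ‖K‖ < 1) : IsUnit (1 + K) := by
  have := isUnit_one_sub_of_norm_lt_one (x := -K) (by rwa [norm_neg])
  rwa [sub_neg_eq_add] at this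

theorem skew_facts {H : Type*} [NormedAddCommGroup H] [InnerProductSpace ℂ H] [CompleteSpace H]
    (A : H →ₗ.[ℂ] H) (hd : Dense (A.domain : Set H)) (hs : A.adjoint = -A) :
    (∀ x y : A.domain, inner ℂ (A x) (y : H) = - inner ℂ (x : H) (A y)) ∧
    (∀ y w : H, (∀ x : A.domain, inner ℂ w (x : H) = inner ℂ y (A x)) →
      ∃ y' : A.domain, (y' : H) = y ∧ A y' = -w) := by
  have h1 := LinearPMap.adjoint_isFormalAdjoint hd
  have h2 : ∀ y w : H, (∀ x : A.domain, inner ℂ w (x : H) = inner ℂ y (A x)) →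
      ∃ y' : A.adjoint.domain, (y' : H) = y ∧ A.adjoint y' = w := by
    intro y w h
    exact ⟨⟨y, LinearPMap.mem_adjoint_domain_of_exists y ⟨w, h⟩⟩, rfl,
      LinearPMap.adjoint_apply_eq hd _ h⟩
  rw [hs] at h1 h2
  constructor
  · intro x y
    have := h1 x y
    rw [LinearPMap.neg_apply, inner_neg_left] at this
    rw [← this, neg_neg]
  · intro y w h
    obtain ⟨y', hy, hw⟩ := h2 y w h
    refine ⟨y', hy, ?_⟩
    rw [LinearPMap.neg_apply] at hw
    rw [← hw, neg_neg]

theorem skew_closed {H : Type*} [NormedAddCommGroup H] [InnerProductSpace ℂ H] [CompleteSpace H]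
    (A : H →ₗ.[ℂ] H) (hd : Dense (A.domain : Set H)) (hs : A.adjoint = -A) :
    IsClosed (A.graph : Set (H × H)) := by
  obtain ⟨h1, h2⟩ := skew_facts A hd hs
  have : (A.graph : Set (H × H)) =
      ⋂ x : A.domain, {p : H × H | inner ℂ (-p.2) (x : H) = inner ℂ p.1 (A x)} := by
    ext p
    simp only [SetLike.mem_coe, Set.mem_iInter, Set.mem_ofPred_eq, LinearPMap.mem_graph_iff]
    constructor
    · rintro ⟨y, hy, hz⟩ x
      rw [← hy, ← hz, inner_neg_left, h1, neg_neg]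
    · intro h
      obtain ⟨y, hy, hz⟩ := h2 _ _ h
      exact ⟨y, hy, by rw [hz, neg_neg]⟩
  rw [this]
  exact isClosed_iInter fun x => isClosed_eq (by fun_prop) (by fun_prop)

theorem skew_inv {H : Type*} [NormedAddCommGroup H] [InnerProductSpace ℂ H] [CompleteSpace H]
    (M : H →L[ℂ] H) (c : ℝ) (hc : 0 < c)
    (hM : ∀ x : H, c * ‖x‖ ^ 2 ≤ (inner ℂ (M x) x : ℂ).re)
    (A : H →ₗ.[ℂ] H) (hd : Dense (A.domain : Set H)) (hs : A.adjoint = -A)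
    (ε : ℝ) (hε : 0 < ε) :
    ∃ Binv : H →L[ℂ] H,
      (∀ x : A.domain, Binv (M (x : H) + ε⁻¹ • A x) = x) ∧
      (∀ y : H, ∃ x : A.domain, M (x : H) + ε⁻¹ • A x = y) := by
  obtain ⟨h1, h2⟩ := skew_facts A hd hs
  have hre : ∀ x : A.domain, (inner ℂ (A x) (x : H) : ℂ).re = 0 := by
    intro x
    have h := congrArg Complex.re (h1 x x)
    rw [Complex.neg_re, ← inner_conj_symm, Complex.conj_re] at h
    have h' : (inner ℂ (x : H) (A x) : ℂ).re = (inner ℂ (A x) (x : H) : ℂ).re := by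
      rw [← inner_conj_symm, Complex.conj_re]
    linarith
  have hcl := skew_closed A hd hs
  have : CompleteSpace A.graph := hcl.completeSpace_coe
  have hcoe : ∀ x : A.domain, c * ‖(x : H)‖ ≤ ‖M (x : H) + (ε⁻¹ : ℂ) • A x‖ := by
    intro x
    have e : (inner ℂ (M (x : H) + (ε⁻¹ : ℂ) • A x) (x : H) : ℂ).re
        = (inner ℂ (M (x : H)) (x : H) : ℂ).re := by
      rw [inner_add_left, inner_smul_left, Complex.add_re, ← Complex.ofReal_inv,
        Complex.conj_ofReal, Complex.re_ofReal_mul, hre]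
      simp
    have h := hM x
    rw [← e] at h
    have h' := (Complex.re_le_norm _).trans
      (norm_inner_le_norm (𝕜 := ℂ) (M (x : H) + (ε⁻¹ : ℂ) • A x) (x : H))
    have h3 := h.trans h'
    rcases (norm_nonneg (x : H)).eq_or_lt with h0 | h0
    · rw [← h0]; simp
    · refine le_of_mul_le_mul_right ?_ h0
      nlinarith
  let f : A.graph →L[ℂ] H :=
    (M.comp (ContinuousLinearMap.fst ℂ H H) +
      (ε⁻¹ : ℂ) • ContinuousLinearMap.snd ℂ H H).comp A.graph.subtypeL
  have hf : ∀ p : A.graph, f p = M p.1.1 + (ε⁻¹ : ℂ) • p.1.2 := fun p => rfl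
  have hK : (0 : ℝ) ≤ c⁻¹ + ε * (1 + ‖M‖ * c⁻¹) := by positivity
  have hanti : AntilipschitzWith ⟨c⁻¹ + ε * (1 + ‖M‖ * c⁻¹), hK⟩ f := by
    apply ContinuousLinearMap.antilipschitz_of_bound
    rintro ⟨⟨u, v⟩, hp⟩
    obtain ⟨x, hx, hv⟩ := (LinearPMap.mem_graph_iff A).1 hp
    simp only at hx hv
    subst hx hv
    rw [hf]
    have h := hcoe x
    have hx : ‖(x : H)‖ ≤ c⁻¹ * ‖M (x : H) + (ε⁻¹ : ℂ) • A x‖ := by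
      rw [inv_mul_eq_div, le_div_iff₀ hc]; linarith
    have hA : A x = (ε : ℂ) • ((M (x : H) + (ε⁻¹ : ℂ) • A x) - M (x : H)) := by
      have : (ε : ℂ) ≠ 0 := by exact_mod_cast hε.ne'
      rw [add_sub_cancel_left, smul_smul, mul_inv_cancel₀ this, one_smul]
    have hA' : ‖A x‖ ≤ ε * (‖M (x : H) + (ε⁻¹ : ℂ) • A x‖ + ‖M‖ * ‖(x : H)‖) := by
      conv_lhs => rw [hA]
      rw [norm_smul, Complex.norm_real, Real.norm_of_nonneg hε.le]
      gcongr
      exact (norm_sub_le _ _).trans (by gcongr; exact M.le_opNorm _)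
    set b := ‖M (x : H) + (ε⁻¹ : ℂ) • A x‖
    have hb : 0 ≤ b := norm_nonneg _
    have hA2 : ‖A x‖ ≤ ε * (b + ‖M‖ * (c⁻¹ * b)) := hA'.trans (by gcongr)
    have p1 : 0 ≤ c⁻¹ * b := by positivity
    have p2 : 0 ≤ ε * (b + ‖M‖ * (c⁻¹ * b)) := by positivity
    change max ‖(x : H)‖ ‖A x‖ ≤ (c⁻¹ + ε * (1 + ‖M‖ * c⁻¹)) * b
    apply max_le <;> linarith
  have hker : f.ker = ⊥ := LinearMap.ker_eq_bot.2 hanti.injective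
  have hrange : f.range = ⊤ := by
    have hclr : IsClosed (f.range : Set H) := by
      have := hanti.isClosed_range f.uniformContinuous
      rw [LinearMap.coe_range]
      exact this
    have : CompleteSpace f.range := hclr.completeSpace_coe
    rw [← Submodule.orthogonal_eq_bot_iff, Submodule.eq_bot_iff]
    intro y hy
    rw [Submodule.mem_orthogonal'] at hy
    have hy' : ∀ x : A.domain, inner ℂ y (M (x : H) + (ε⁻¹ : ℂ) • A x) = 0 := fun x =>
      hy _ ⟨⟨((x : H), A x), A.mem_graph x⟩, rfl⟩
    have hεc : (ε : ℂ) ≠ 0 := by exact_mod_cast hε.ne'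
    obtain ⟨x, hx, hz⟩ := h2 y (-((ε : ℂ) • M.adjoint y)) (by
      intro x
      have := hy' x
      rw [inner_add_right, inner_smul_right] at this
      rw [inner_neg_left, inner_smul_left, Complex.conj_ofReal,
        ContinuousLinearMap.adjoint_inner_left]
      field_simp at this
      linear_combination -this)
    subst hx
    have h := hre x
    rw [hz, neg_neg, inner_smul_left, Complex.conj_ofReal, Complex.re_ofReal_mul,
      ContinuousLinearMap.adjoint_inner_left, ← inner_conj_symm, Complex.conj_re] at h
    have h0 : (inner ℂ (M (x : H)) (x : H) : ℂ).re = 0 := by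
      rcases mul_eq_zero.1 h with h | h
      · exact absurd h hε.ne'
      · exact h
    have h3 := hM x
    rw [h0] at h3
    have : ‖(x : H)‖ ^ 2 ≤ 0 := by
      by_contra hh
      push Not at hh
      nlinarith [mul_pos hc hh]
    have : ‖(x : H)‖ = 0 := by
      have := le_antisymm this (by positivity)
      simpa using this
    simpa using this
  let e := ContinuousLinearEquiv.ofBijective f hker hrange
  have hsm : ∀ z : H, ε⁻¹ • z = (ε⁻¹ : ℂ) • z := by
    intro z
    rw [← Complex.ofReal_inv, Complex.coe_smul]
  refine ⟨((ContinuousLinearMap.fst ℂ H H).comp A.graph.subtypeL).comp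
    (e.symm : H →L[ℂ] A.graph), ?_, ?_⟩
  · intro x
    rw [hsm]
    have : e.symm (f ⟨((x : H), A x), A.mem_graph x⟩) = ⟨((x : H), A x), A.mem_graph x⟩ :=
      ContinuousLinearEquiv.ofBijective_symm_apply_apply f hker hrange _
    rw [hf] at this
    simp [this]
  · intro y
    obtain ⟨⟨⟨u, v⟩, hp⟩, hq⟩ := LinearMap.range_eq_top.1 hrange y
    obtain ⟨x, hx, hv⟩ := (LinearPMap.mem_graph_iff A).1 hp
    simp only at hx hv
    subst hx hv
    exact ⟨x, by rw [hsm]; exact hq⟩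

/-- Under Hypothesis (H), for every `ε ∈ (0, 1/(2 C_R ‖M‖))` both
`B_ε = M + ε⁻¹ A` (domain `dom A`) and `B_{ε,R} = ι_R* M ι_R + ε⁻¹ ι_R* A ι_R`
(domain `dom(A) ∩ R`) are boundedly invertible, and
`π_R B_ε⁻¹ = ι_R B_{ε,R}⁻¹ (ι_R* − ι_R* M π_N B_ε⁻¹)`. -/
theorem statement6
    {H : Type*} [NormedAddCommGroup H] [InnerProductSpace ℂ H] [CompleteSpace H]
    -- `M` is a bounded operator with `Re⟪M x, x⟫ ≥ c ‖x‖²`, `c > 0`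
    (M : H →L[ℂ] H) (c : ℝ) (hc : 0 < c)
    (hM : ∀ x : H, c * ‖x‖ ^ 2 ≤ (inner ℂ (M x) x : ℂ).re)
    -- `A` is densely defined and skew-selfadjoint
    (A : H →ₗ.[ℂ] H) (hA_dense : Dense (A.domain : Set H)) (hA_skew : A.adjoint = -A)
    -- `N` is a closed subspace, `R = Nᗮ`
    (N : Submodule ℂ H) [CompleteSpace N]
    (C_R : ℝ) (hC_R : 0 < C_R)
    -- Hypothesis (H)(a): `N ⊆ dom A` and `A π_N` is bounded
    (hHa_sub : N ≤ A.domain)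
    (hHa_bdd : ∃ Ca : ℝ, ∀ x : A.domain, (x : H) ∈ N → ‖A x‖ ≤ Ca * ‖(x : H)‖)
    -- Hypothesis (H)(b): `π_R A ⊆ A π_R`
    (hHb : ∀ x : A.domain,
      ∃ hx : ((Submodule.orthogonalProjectionOnto Nᗮ (x : H) : H)) ∈ A.domain,
        (Submodule.orthogonalProjectionOnto Nᗮ (A x) : H)
          = A ⟨(Submodule.orthogonalProjectionOnto Nᗮ (x : H) : H), hx⟩)
    -- Hypothesis (H)(c): the compression `ι_R* A ι_R`, with domain `dom(A) ∩ R`, is a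
    -- bijection onto `R` with bounded inverse of norm at most `C_R`
    (hHc : ∃ J : Nᗮ →L[ℂ] Nᗮ, ‖J‖ ≤ C_R ∧
      (∀ (x : A.domain) (hx : (x : H) ∈ Nᗮ),
        J (Submodule.orthogonalProjectionOnto Nᗮ (A x)) = ⟨(x : H), hx⟩) ∧
      (∀ y : Nᗮ, ∃ (x : A.domain) (hx : (x : H) ∈ Nᗮ),
        Submodule.orthogonalProjectionOnto Nᗮ (A x) = y))
    (ε : ℝ) (hε : ε ∈ Set.Ioo (0 : ℝ) (1 / (2 * C_R * ‖M‖))) :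
    ∃ (Binv : H →L[ℂ] H) (JR : Nᗮ →L[ℂ] Nᗮ),
      -- `Binv` is the bounded inverse of `B_ε = M + ε⁻¹ A`
      (∀ x : A.domain, Binv (M (x : H) + ε⁻¹ • A x) = x) ∧
      (∀ y : H, ∃ x : A.domain, M (x : H) + ε⁻¹ • A x = y) ∧
      -- `JR` is the bounded inverse of `B_{ε,R}` (domain `dom(A) ∩ R`)
      (∀ (x : A.domain) (hx : (x : H) ∈ Nᗮ),
        JR (Submodule.orthogonalProjectionOnto Nᗮ (M (x : H)) + ε⁻¹ • Submodule.orthogonalProjectionOnto Nᗮ (A x))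
          = ⟨(x : H), hx⟩) ∧
      (∀ y : Nᗮ, ∃ (x : A.domain) (hx : (x : H) ∈ Nᗮ),
        Submodule.orthogonalProjectionOnto Nᗮ (M (x : H)) + ε⁻¹ • Submodule.orthogonalProjectionOnto Nᗮ (A x) = y) ∧
      -- the identity `π_R B_ε⁻¹ = ι_R B_{ε,R}⁻¹ (ι_R* − ι_R* M π_N B_ε⁻¹)`
      (∀ y : H, (Submodule.orthogonalProjectionOnto Nᗮ (Binv y) : H)
          = (JR (Submodule.orthogonalProjectionOnto Nᗮ y
              - Submodule.orthogonalProjectionOnto Nᗮ (M ((Submodule.orthogonalProjectionOnto N (Binv y) : H)))) : H)) := by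
  obtain ⟨hε0, hε1⟩ := hε
  obtain ⟨Binv, hB1, hB2⟩ := skew_inv M c hc hM A hA_dense hA_skew ε hε0
  obtain ⟨J, hJ, hJ1, hJ2⟩ := hHc
  let MR : Nᗮ →L[ℂ] Nᗮ := (Submodule.orthogonalProjectionOnto Nᗮ).comp (M.comp Nᗮ.subtypeL)
  have hMR : ∀ x : Nᗮ, MR x = Submodule.orthogonalProjectionOnto Nᗮ (M (x : H)) := fun _ => rfl
  have hMRn : ‖MR‖ ≤ ‖M‖ := by
    refine ContinuousLinearMap.opNorm_le_bound _ (norm_nonneg _) fun x => ?_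
    rw [hMR]
    exact (Submodule.norm_orthogonalProjectionOnto_apply_le _ _).trans (M.le_opNorm _)
  have hMpos : 0 < ‖M‖ := by
    rcases (norm_nonneg M).eq_or_lt with h | h
    · rw [← h] at hε1; simp at hε1; linarith
    · exact h
  have hlt : ε * (2 * C_R * ‖M‖) < 1 := by
    rwa [lt_div_iff₀ (by positivity)] at hε1
  have hnorm : ‖(ε : ℂ) • (MR * J)‖ < 1 := by
    refine (norm_smul_clm_le ε hε0.le _).trans_lt ?_
    have h1 : ‖MR * J‖ ≤ ‖M‖ * C_R := (ContinuousLinearMap.opNorm_comp_le MR J).trans (by gcongr)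
    have h2 : ε * ‖MR * J‖ ≤ ε * (‖M‖ * C_R) := by gcongr
    have h3 : 0 < ε * (‖M‖ * C_R) := by positivity
    nlinarith
  obtain ⟨T, hT⟩ := isUnit_one_add_clm _ hnorm
  have hTa : ∀ z : Nᗮ, (T : Nᗮ →L[ℂ] Nᗮ) z = z + (ε : ℂ) • MR (J z) := by
    intro z; rw [hT]; simp
  have hST : ∀ z : Nᗮ, (↑T⁻¹ : Nᗮ →L[ℂ] Nᗮ) ((T : Nᗮ →L[ℂ] Nᗮ) z) = z := by
    intro z; rw [← ContinuousLinearMap.mul_apply, Units.inv_mul]; rfl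
  have hTS : ∀ z : Nᗮ, (T : Nᗮ →L[ℂ] Nᗮ) ((↑T⁻¹ : Nᗮ →L[ℂ] Nᗮ) z) = z := by
    intro z; rw [← ContinuousLinearMap.mul_apply, Units.mul_inv]; rfl
  have hsm : ∀ z : Nᗮ, ε⁻¹ • z = (ε⁻¹ : ℂ) • z := by
    intro z
    rw [← Complex.ofReal_inv, Complex.coe_smul]
  have hεc : (ε : ℂ) ≠ 0 := by exact_mod_cast hε0.ne'
  have hBR : ∀ (x : A.domain) (hx : (x : H) ∈ Nᗮ),
      Submodule.orthogonalProjectionOnto Nᗮ (M (x : H)) +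
        ε⁻¹ • Submodule.orthogonalProjectionOnto Nᗮ (A x) =
      (ε⁻¹ : ℂ) • (T : Nᗮ →L[ℂ] Nᗮ) (Submodule.orthogonalProjectionOnto Nᗮ (A x)) := by
    intro x hx
    rw [hTa, hJ1 x hx, hsm, hMR, smul_add, smul_smul, inv_mul_cancel₀ hεc, one_smul, add_comm]
  have hJR : ∀ (x : A.domain) (hx : (x : H) ∈ Nᗮ),
      ((ε : ℂ) • (J * (↑T⁻¹ : Nᗮ →L[ℂ] Nᗮ)))
        (Submodule.orthogonalProjectionOnto Nᗮ (M (x : H)) +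
          ε⁻¹ • Submodule.orthogonalProjectionOnto Nᗮ (A x)) = ⟨(x : H), hx⟩ := by
    intro x hx
    rw [hBR x hx, ContinuousLinearMap.smul_apply, ContinuousLinearMap.mul_apply, map_smul, hST,
      map_smul, hJ1 x hx, smul_smul, mul_inv_cancel₀ hεc, one_smul]
  refine ⟨Binv, (ε : ℂ) • (J * (↑T⁻¹ : Nᗮ →L[ℂ] Nᗮ)), hB1, hB2, hJR, ?_, ?_⟩
  · intro y
    obtain ⟨x, hx, hxy⟩ := hJ2 ((ε : ℂ) • (↑T⁻¹ : Nᗮ →L[ℂ] Nᗮ) y)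
    refine ⟨x, hx, ?_⟩
    rw [hBR x hx, hxy, map_smul, hTS, smul_smul, inv_mul_cancel₀ hεc, one_smul]
  · intro y
    obtain ⟨x, rfl⟩ := hB2 y
    rw [hB1]
    obtain ⟨hx, hAx⟩ := hHb x
    have hx' : (Submodule.orthogonalProjectionOnto Nᗮ (x : H) : H) ∈ Nᗮ := Subtype.prop _
    have key := hJR ⟨_, hx⟩ hx'
    have e1 : Submodule.orthogonalProjectionOnto Nᗮ
        (A ⟨(Submodule.orthogonalProjectionOnto Nᗮ (x : H) : H), hx⟩)
        = Submodule.orthogonalProjectionOnto Nᗮ (A x) := by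
      rw [← hAx, Submodule.orthogonalProjectionOnto_mem_subspace_eq_self]
    have e2 : (x : H) = (Submodule.orthogonalProjectionOnto N (x : H) : H)
        + (Submodule.orthogonalProjectionOnto Nᗮ (x : H) : H) := by
      simpa using (Submodule.starProjection_add_starProjection_orthogonal (K := N) (x : H)).symm
    have e3 : Submodule.orthogonalProjectionOnto Nᗮ (M (x : H) + ε⁻¹ • A x)
        - Submodule.orthogonalProjectionOnto Nᗮ
            (M (Submodule.orthogonalProjectionOnto N (x : H) : H))
        = Submodule.orthogonalProjectionOnto Nᗮ
            (M (Submodule.orthogonalProjectionOnto Nᗮ (x : H) : H))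
          + ε⁻¹ • Submodule.orthogonalProjectionOnto Nᗮ (A x) := by
      have e4 : Submodule.orthogonalProjectionOnto Nᗮ (M (x : H)) =
          Submodule.orthogonalProjectionOnto Nᗮ
            (M (Submodule.orthogonalProjectionOnto N (x : H) : H)) +
          Submodule.orthogonalProjectionOnto Nᗮ
            (M (Submodule.orthogonalProjectionOnto Nᗮ (x : H) : H)) := by
        rw [← map_add, ← map_add, ← e2]
      have e5 : ε⁻¹ • A x = (ε⁻¹ : ℂ) • A x := by
        rw [← Complex.ofReal_inv, Complex.coe_smul]
      rw [map_add, e4, e5, map_smul, hsm]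
      abel
    rw [e3]
    rw [e1] at key
    exact (congrArg Subtype.val key).symm
end

section
/- Assume Hypothesis (H) and let ε₀ := 1/(2 C_R ‖M‖). Then for every ε ∈ (0, ε₀), the operator B_ε := M + ε⁻¹ A (with domain dom(A)) is boundedly invertible and ‖ B_ε⁻¹ − ι_N B_{ε,N}⁻¹ ι_N* ‖ ≤ 2 C_R (1 + ‖M‖/c)² ε. -/
namespace S7

variable {H : Type*} [NormedAddCommGroup H] [InnerProductSpace ℂ H]

lemma bound_of_coercive {c : ℝ} {x y : H} (h : c * ‖x‖ ^ 2 ≤ (inner ℂ y x : ℂ).re) :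
    c * ‖x‖ ≤ ‖y‖ := by
  have h1 : (inner ℂ y x : ℂ).re ≤ ‖y‖ * ‖x‖ :=
    (Complex.re_le_norm _).trans (norm_inner_le_norm y x)
  rcases (norm_nonneg x).eq_or_lt with h0 | h0
  · rw [← h0]; simp
  · nlinarith

lemma skew_inner [CompleteSpace H] {A : H →ₗ.[ℂ] H} (hd : Dense (A.domain : Set H))
    (hs : A.adjoint = -A) (x y : A.domain) :
    (inner ℂ (A x) (y : H) : ℂ) = - inner ℂ (x : H) (A y) := by
  have h := LinearPMap.adjoint_isFormalAdjoint hd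
  rw [hs] at h
  have := h x y
  rw [LinearPMap.neg_apply, inner_neg_left] at this
  rw [← this, neg_neg]

lemma skew_max [CompleteSpace H] {A : H →ₗ.[ℂ] H} (hd : Dense (A.domain : Set H))
    (hs : A.adjoint = -A) (x w : H)
    (h : ∀ z : A.domain, (inner ℂ w (z : H) : ℂ) = - inner ℂ x (A z)) :
    ∃ hx : x ∈ A.domain, A ⟨x, hx⟩ = w := by
  have h' : ∀ z : A.domain, (inner ℂ (-w) (z : H) : ℂ) = inner ℂ x (A z) := by
    intro z; rw [inner_neg_left, h, neg_neg]
  have hx : x ∈ A.adjoint.domain := LinearPMap.mem_adjoint_domain_of_exists x ⟨-w, h'⟩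
  have h2 : A.adjoint ⟨x, hx⟩ = -w := LinearPMap.adjoint_apply_eq hd ⟨x, hx⟩ h'
  have key : ∀ B : H →ₗ.[ℂ] H, B = -A → ∀ hx : x ∈ B.domain, B ⟨x, hx⟩ = -w →
      ∃ hx : x ∈ A.domain, A ⟨x, hx⟩ = w := by
    rintro B rfl hx h
    refine ⟨hx, ?_⟩
    rw [LinearPMap.neg_apply] at h
    exact neg_injective h
  exact key _ hs hx h2

lemma skew_re [CompleteSpace H] {A : H →ₗ.[ℂ] H} (hd : Dense (A.domain : Set H))
    (hs : A.adjoint = -A) (x : A.domain) : (inner ℂ (A x) (x : H) : ℂ).re = 0 := by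
  have h := congrArg Complex.re (skew_inner hd hs x x)
  have h2 : (inner ℂ (x : H) (A x) : ℂ).re = (inner ℂ (A x) (x : H) : ℂ).re :=
    inner_re_symm (𝕜 := ℂ) _ _
  rw [Complex.neg_re, h2] at h
  linarith

lemma graph_closed [CompleteSpace H] {A : H →ₗ.[ℂ] H} (hd : Dense (A.domain : Set H))
    (hs : A.adjoint = -A) : IsClosed (A.graph : Set (H × H)) := by
  have : (A.graph : Set (H × H)) =
      ⋂ z : A.domain, {p : H × H | (inner ℂ p.2 (z : H) : ℂ) = - inner ℂ p.1 (A z)} := by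
    ext ⟨x, w⟩
    simp only [SetLike.mem_coe, Set.mem_iInter, Set.mem_setOf_eq, LinearPMap.mem_graph_iff]
    constructor
    · rintro ⟨y, rfl, rfl⟩ z
      exact skew_inner hd hs y z
    · intro h
      obtain ⟨hx, h2⟩ := skew_max hd hs x w h
      exact ⟨⟨x, hx⟩, rfl, h2⟩
  rw [this]
  refine isClosed_iInter fun z => isClosed_eq (by fun_prop) (by fun_prop)

lemma coer [CompleteSpace H] {A : H →ₗ.[ℂ] H} (hd : Dense (A.domain : Set H))
    (hs : A.adjoint = -A) (M : H →L[ℂ] H) (c : ℝ)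
    (hM : ∀ x : H, c * ‖x‖ ^ 2 ≤ (inner ℂ (M x) x : ℂ).re) (t : ℝ) (x : A.domain) :
    c * ‖(x : H)‖ ^ 2 ≤ (inner ℂ (M (x : H) + t • A x) (x : H) : ℂ).re := by
  rw [inner_add_left, Complex.add_re, ← Complex.coe_smul, inner_smul_left, Complex.conj_ofReal,
    Complex.re_ofReal_mul, skew_re hd hs]
  simpa using hM x

lemma exists_inverse [CompleteSpace H] {A : H →ₗ.[ℂ] H} (hd : Dense (A.domain : Set H))
    (hs : A.adjoint = -A) (M : H →L[ℂ] H) (c : ℝ) (hc : 0 < c)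
    (hM : ∀ x : H, c * ‖x‖ ^ 2 ≤ (inner ℂ (M x) x : ℂ).re) (t : ℝ) (ht : 0 < t) :
    ∃ Binv : H →L[ℂ] H, (∀ x : A.domain, Binv (M (x : H) + t • A x) = x) ∧
      (∀ y : H, ∃ x : A.domain, M (x : H) + t • A x = y) := by
  haveI : CompleteSpace A.graph := (graph_closed hd hs).completeSpace_coe
  let f : A.graph →L[ℂ] H :=
    (M.comp (ContinuousLinearMap.fst ℂ H H) +
      ((t : ℝ) : ℂ) • ContinuousLinearMap.snd ℂ H H).comp A.graph.subtypeL
  have hf : ∀ (x : A.domain) (hx : ((x : H), A x) ∈ A.graph),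
      f ⟨((x : H), A x), hx⟩ = M (x : H) + t • A x := by
    intro x hx
    simp [f]
  have hb : ∀ x : A.domain, ‖(x : H)‖ ≤ ‖M (x : H) + t • A x‖ / c := by
    intro x
    rw [le_div_iff₀ hc, mul_comm]
    exact bound_of_coercive (coer hd hs M c hM t x)
  let K : ℝ := c⁻¹ + t⁻¹ * (1 + ‖M‖ / c)
  have hK : 0 ≤ K := by positivity
  have hanti : AntilipschitzWith ⟨K, hK⟩ f := by
    apply ContinuousLinearMap.antilipschitz_of_bound
    rintro ⟨⟨x, w⟩, hp⟩
    obtain ⟨x, rfl, rfl⟩ := (LinearPMap.mem_graph_iff A).1 hp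
    change ‖((x : H), A x)‖ ≤ K * ‖f ⟨((x : H), A x), hp⟩‖
    rw [hf]
    set y := M (x : H) + t • A x with hy
    have h1 : ‖(x : H)‖ ≤ ‖y‖ / c := hb x
    have h2 : A x = t⁻¹ • (y - M x) := by
      rw [hy, add_sub_cancel_left, smul_smul, inv_mul_cancel₀ ht.ne', one_smul]
    have h3 : ‖A x‖ ≤ t⁻¹ * ((1 + ‖M‖ / c) * ‖y‖) := by
      rw [h2, norm_smul, Real.norm_of_nonneg (by positivity)]
      gcongr
      calc ‖y - M x‖ ≤ ‖y‖ + ‖M x‖ := norm_sub_le _ _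
        _ ≤ ‖y‖ + ‖M‖ * (‖y‖ / c) := by
          gcongr
          exact (M.le_opNorm _).trans (by gcongr)
        _ = _ := by ring
    rw [Prod.norm_def]
    have h4 : 0 ≤ t⁻¹ * ((1 + ‖M‖ / c) * ‖y‖) := by positivity
    have h5 : 0 ≤ ‖y‖ / c := by positivity
    have h6 : K * ‖y‖ = ‖y‖ / c + t⁻¹ * ((1 + ‖M‖ / c) * ‖y‖) := by
      simp only [K]; ring
    rw [h6]
    exact max_le (by simp only; linarith) (by simp only; linarith)
  have hclosed : IsClosed (Set.range f) := hanti.isClosed_range f.uniformContinuous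
  have hker : f.ker = ⊥ := LinearMap.ker_eq_bot.2 hanti.injective
  have hrange : f.range = ⊤ := by
    have hcl : IsClosed (f.range : Set H) := by
      have he : (f.range : Set H) = Set.range f := by ext; simp
      rw [he]; exact hclosed
    rw [← hcl.submodule_topologicalClosure_eq, Submodule.topologicalClosure_eq_top_iff,
      Submodule.eq_bot_iff]
    intro x hx
    have hz : ∀ z : A.domain, (inner ℂ x (M (z : H) + t • A z) : ℂ) = 0 := by
      intro z
      have := (Submodule.mem_orthogonal' _ _).1 hx (f ⟨((z : H), A z), A.mem_graph z⟩) ⟨_, rfl⟩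
      rwa [hf] at this
    obtain ⟨hxd, hAx⟩ := skew_max hd hs x (((t⁻¹ : ℝ) : ℂ) • (ContinuousLinearMap.adjoint M) x) (by
      intro z
      have h := hz z
      rw [inner_add_right, ← Complex.coe_smul, inner_smul_right] at h
      rw [inner_smul_left, Complex.conj_ofReal, ContinuousLinearMap.adjoint_inner_left]
      rw [eq_neg_of_add_eq_zero_left h, Complex.ofReal_inv]
      have : (t : ℂ) ≠ 0 := by exact_mod_cast ht.ne'
      field_simp)
    have h0 := skew_re hd hs ⟨x, hxd⟩
    rw [hAx, inner_smul_left, Complex.conj_ofReal, ContinuousLinearMap.adjoint_inner_left,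
      Complex.re_ofReal_mul] at h0
    have h1 : (inner ℂ x (M x) : ℂ).re = (inner ℂ (M x) x : ℂ).re :=
      inner_re_symm (𝕜 := ℂ) _ _
    have h2 : (inner ℂ (M x) x : ℂ).re = 0 := by
      rw [← h1]
      exact (mul_eq_zero.1 h0).resolve_left (by positivity)
    have h3 := hM x
    rw [h2] at h3
    have h4 : ‖x‖ ^ 2 ≤ 0 := by nlinarith
    exact norm_eq_zero.1 (pow_eq_zero_iff two_ne_zero |>.1 (le_antisymm h4 (by positivity)))
  let e := ContinuousLinearEquiv.ofBijective f hker hrange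
  refine ⟨(ContinuousLinearMap.fst ℂ H H).comp
    (A.graph.subtypeL.comp (e.symm : H →L[ℂ] A.graph)), ?_, ?_⟩
  · intro x
    rw [← hf x (A.mem_graph x)]
    simp only [ContinuousLinearMap.comp_apply, ContinuousLinearEquiv.coe_coe, e,
      ContinuousLinearEquiv.ofBijective_symm_apply_apply]
    rfl
  · intro y
    have : y ∈ f.range := by rw [hrange]; trivial
    obtain ⟨⟨⟨x, w⟩, hp⟩, hxy⟩ := this
    obtain ⟨x, rfl, rfl⟩ := (LinearPMap.mem_graph_iff A).1 hp
    exact ⟨x, (hf x hp).symm.trans hxy⟩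

lemma exists_inverse_N [CompleteSpace H] {A : H →ₗ.[ℂ] H} (hd : Dense (A.domain : Set H))
    (hs : A.adjoint = -A) (M : H →L[ℂ] H) (c : ℝ) (hc : 0 < c)
    (hM : ∀ x : H, c * ‖x‖ ^ 2 ≤ (inner ℂ (M x) x : ℂ).re)
    (N : Submodule ℂ H) [CompleteSpace N]
    (hsub : N ≤ A.domain)
    (hbdd : ∃ Ca : ℝ, ∀ x : A.domain, (x : H) ∈ N → ‖A x‖ ≤ Ca * ‖(x : H)‖)
    (t : ℝ) :
    ∃ JN : N →L[ℂ] N, (∀ y, ‖JN y‖ ≤ ‖y‖ / c) ∧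
      (∀ x : N,
        JN (Submodule.orthogonalProjectionOnto N (M (x : H))
            + t • Submodule.orthogonalProjectionOnto N (A ⟨(x : H), hsub x.2⟩)) = x) ∧
      (∀ y : N, ∃ x : N,
        Submodule.orthogonalProjectionOnto N (M (x : H))
            + t • Submodule.orthogonalProjectionOnto N (A ⟨(x : H), hsub x.2⟩) = y) := by
  obtain ⟨Ca, hCa⟩ := hbdd
  let AN : N →L[ℂ] H := (A.toFun.comp (Submodule.inclusion hsub)).mkContinuous Ca
    (fun x => hCa ⟨x, hsub x.2⟩ x.2)
  have hAN : ∀ x : N, AN x = A ⟨(x : H), hsub x.2⟩ := fun x => rfl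
  let T : N →L[ℂ] N := (Submodule.orthogonalProjectionOnto N).comp
    (M.comp N.subtypeL + ((t : ℝ) : ℂ) • AN)
  have hT : ∀ x : N, T x = Submodule.orthogonalProjectionOnto N (M (x : H))
            + t • Submodule.orthogonalProjectionOnto N (A ⟨(x : H), hsub x.2⟩) := by
    intro x
    change Submodule.orthogonalProjectionOnto N (M (x : H) + ((t : ℝ) : ℂ) • AN x) = _
    rw [map_add, map_smul, Complex.coe_smul, hAN]
  have hcoer : ∀ x : N, c * ‖x‖ ^ 2 ≤ (inner ℂ (T x) x : ℂ).re := by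
    intro x
    have h := coer hd hs M c hM t ⟨(x : H), hsub x.2⟩
    have h2 : (inner ℂ (T x) x : ℂ)
        = inner ℂ (M (x : H) + t • A ⟨(x : H), hsub x.2⟩) (x : H) := by
      rw [← Submodule.inner_orthogonalProjectionOnto_eq_of_mem_right]
      simp only [T, ContinuousLinearMap.comp_apply, ContinuousLinearMap.add_apply,
        ContinuousLinearMap.smul_apply, hAN, Complex.coe_smul]
      rfl
    rw [h2]
    exact h
  have hunit : IsUnit T := by
    refine ContinuousLinearMap.isUnit_of_forall_le_norm_inner_map T (c := ⟨c, hc.le⟩) hc ?_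
    intro x
    rw [mul_comm]
    exact (hcoer x).trans (Complex.re_le_norm _)
  obtain ⟨u, hu⟩ := hunit
  have hl : ∀ x, (↑u⁻¹ : N →L[ℂ] N) (T x) = x := by
    intro x
    rw [← hu, ← ContinuousLinearMap.mul_apply, Units.inv_mul]; rfl
  have hr : ∀ x, T ((↑u⁻¹ : N →L[ℂ] N) x) = x := by
    intro x
    rw [← hu, ← ContinuousLinearMap.mul_apply, Units.mul_inv]; rfl
  refine ⟨(↑u⁻¹ : N →L[ℂ] N), ?_, ?_, ?_⟩
  · intro y
    rw [le_div_iff₀ hc, mul_comm]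
    have := bound_of_coercive (hcoer ((↑u⁻¹ : N →L[ℂ] N) y))
    rwa [hr] at this
  · intro x; rw [← hT, hl]
  · intro y; exact ⟨_, (hT _).symm.trans (hr y)⟩

end S7


/-- Under Hypothesis (H), for every `ε ∈ (0, 1/(2 C_R ‖M‖))` the operator
`B_ε = M + ε⁻¹ A` is boundedly invertible and
`‖B_ε⁻¹ − ι_N B_{ε,N}⁻¹ ι_N*‖ ≤ 2 C_R (1 + ‖M‖/c)² ε`. -/
theorem statement7
    {H : Type*} [NormedAddCommGroup H] [InnerProductSpace ℂ H] [CompleteSpace H]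
    -- `M` is a bounded operator with `Re⟪M x, x⟫ ≥ c ‖x‖²`, `c > 0`
    (M : H →L[ℂ] H) (c : ℝ) (hc : 0 < c)
    (hM : ∀ x : H, c * ‖x‖ ^ 2 ≤ (inner ℂ (M x) x : ℂ).re)
    -- `A` is densely defined and skew-selfadjoint
    (A : H →ₗ.[ℂ] H) (hA_dense : Dense (A.domain : Set H)) (hA_skew : A.adjoint = -A)
    -- `N` is a closed subspace, `R = Nᗮ`
    (N : Submodule ℂ H) [CompleteSpace N]
    (C_R : ℝ) (hC_R : 0 < C_R)
    -- Hypothesis (H)(a): `N ⊆ dom A` and `A π_N` is bounded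
    (hHa_sub : N ≤ A.domain)
    (hHa_bdd : ∃ Ca : ℝ, ∀ x : A.domain, (x : H) ∈ N → ‖A x‖ ≤ Ca * ‖(x : H)‖)
    -- Hypothesis (H)(b): `π_R A ⊆ A π_R`
    (hHb : ∀ x : A.domain,
      ∃ hx : ((Submodule.orthogonalProjectionOnto Nᗮ (x : H) : H)) ∈ A.domain,
        (Submodule.orthogonalProjectionOnto Nᗮ (A x) : H)
          = A ⟨(Submodule.orthogonalProjectionOnto Nᗮ (x : H) : H), hx⟩)
    -- Hypothesis (H)(c): the compression `ι_R* A ι_R`, with domain `dom(A) ∩ R`, is a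
    -- bijection onto `R` with bounded inverse of norm at most `C_R`
    (hHc : ∃ J : Nᗮ →L[ℂ] Nᗮ, ‖J‖ ≤ C_R ∧
      (∀ (x : A.domain) (hx : (x : H) ∈ Nᗮ),
        J (Submodule.orthogonalProjectionOnto Nᗮ (A x)) = ⟨(x : H), hx⟩) ∧
      (∀ y : Nᗮ, ∃ (x : A.domain) (hx : (x : H) ∈ Nᗮ),
        Submodule.orthogonalProjectionOnto Nᗮ (A x) = y))
    (ε : ℝ) (hε : ε ∈ Set.Ioo (0 : ℝ) (1 / (2 * C_R * ‖M‖))) :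
    ∃ (Binv : H →L[ℂ] H) (JN : N →L[ℂ] N),
      -- `Binv` is the bounded inverse of `B_ε = M + ε⁻¹ A`
      (∀ x : A.domain, Binv (M (x : H) + ε⁻¹ • A x) = x) ∧
      (∀ y : H, ∃ x : A.domain, M (x : H) + ε⁻¹ • A x = y) ∧
      -- `JN` is the bounded inverse of `B_{ε,N} = ι_N* M ι_N + ε⁻¹ ι_N* A ι_N` on `N`
      (∀ x : N,
        JN (Submodule.orthogonalProjectionOnto N (M (x : H))
            + ε⁻¹ • Submodule.orthogonalProjectionOnto N (A ⟨(x : H), hHa_sub x.2⟩)) = x) ∧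
      (∀ y : N, ∃ x : N,
        Submodule.orthogonalProjectionOnto N (M (x : H))
            + ε⁻¹ • Submodule.orthogonalProjectionOnto N (A ⟨(x : H), hHa_sub x.2⟩) = y) ∧
      -- the estimate `‖B_ε⁻¹ − ι_N B_{ε,N}⁻¹ ι_N*‖ ≤ 2 C_R (1 + ‖M‖/c)² ε`
      ‖Binv - N.subtypeL.comp (JN.comp (Submodule.orthogonalProjectionOnto N))‖
        ≤ 2 * C_R * (1 + ‖M‖ / c) ^ 2 * ε := by
  obtain ⟨hε0, -⟩ := hε
  have ht : 0 < ε⁻¹ := inv_pos.2 hε0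
  obtain ⟨Binv, hB1, hB2⟩ := S7.exists_inverse hA_dense hA_skew M c hc hM ε⁻¹ ht
  obtain ⟨JN, hJb, hJ1, hJ2⟩ :=
    S7.exists_inverse_N hA_dense hA_skew M c hc hM N hHa_sub hHa_bdd ε⁻¹
  refine ⟨Binv, JN, hB1, hB2, hJ1, hJ2, ?_⟩
  obtain ⟨J, hJn, hJl, -⟩ := hHc
  refine ContinuousLinearMap.opNorm_le_bound _ (by positivity) fun y => ?_
  obtain ⟨x, rfl⟩ := hB2 y
  set y := M (x : H) + ε⁻¹ • A x with hy
  have hxy : ‖(x : H)‖ ≤ ‖y‖ / c := by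
    rw [le_div_iff₀ hc, mul_comm]
    exact S7.bound_of_coercive (S7.coer hA_dense hA_skew M c hM ε⁻¹ x)
  obtain ⟨hrd, hrA⟩ := hHb x
  set r : Nᗮ := Submodule.orthogonalProjectionOnto Nᗮ (x : H) with hr
  set n : N := Submodule.orthogonalProjectionOnto N (x : H) with hn
  have hsum : (x : H) = n + r :=
    (Submodule.starProjection_add_starProjection_orthogonal (K := N) (x : H)).symm
  -- the R part
  have hyM : A x = ε • (y - M x) := by
    rw [hy, add_sub_cancel_left, smul_smul, mul_inv_cancel₀ hε0.ne', one_smul]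
  have hrJ : r = J (Submodule.orthogonalProjectionOnto Nᗮ (A x)) := by
    have h := hJl ⟨(r : H), hrd⟩ r.2
    rw [← hrA, Submodule.orthogonalProjectionOnto_mem_subspace_eq_self] at h
    exact h.symm
  have hrn : ‖(r : H)‖ ≤ C_R * (ε * ((1 + ‖M‖ / c) * ‖y‖)) := by
    have h1 : ‖y - M x‖ ≤ (1 + ‖M‖ / c) * ‖y‖ := by
      calc ‖y - M x‖ ≤ ‖y‖ + ‖M x‖ := norm_sub_le _ _
        _ ≤ ‖y‖ + ‖M‖ * (‖y‖ / c) := by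
          gcongr
          exact (M.le_opNorm _).trans (by gcongr)
        _ = _ := by ring
    have h2 : ‖A x‖ ≤ ε * ((1 + ‖M‖ / c) * ‖y‖) := by
      rw [hyM, norm_smul, Real.norm_of_nonneg hε0.le]
      gcongr
    change ‖r‖ ≤ _
    rw [hrJ]
    refine (J.le_opNorm _).trans ?_
    have h3 := (Submodule.norm_orthogonalProjectionOnto_apply_le Nᗮ (A x)).trans h2
    gcongr
  -- the N part
  have hAn : Submodule.orthogonalProjectionOnto N (A ⟨(n : H), hHa_sub n.2⟩)
      = Submodule.orthogonalProjectionOnto N (A x) := by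
    have h1 : x = ⟨(n : H), hHa_sub n.2⟩ + ⟨(r : H), hrd⟩ := Subtype.ext hsum
    have h2 : A x = A ⟨(n : H), hHa_sub n.2⟩ + A ⟨(r : H), hrd⟩ := by
      rw [← LinearPMap.map_add, ← h1]
    rw [h2, map_add, ← hrA]
    rw [Submodule.orthogonalProjectionOnto_apply_of_mem_orthogonal
      (Subtype.property (Submodule.orthogonalProjectionOnto Nᗮ (A x))), add_zero]
  have hPy : Submodule.orthogonalProjectionOnto N y
      = (Submodule.orthogonalProjectionOnto N (M (n : H))
        + ε⁻¹ • Submodule.orthogonalProjectionOnto N (A ⟨(n : H), hHa_sub n.2⟩))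
        + Submodule.orthogonalProjectionOnto N (M (r : H)) := by
    have hs : Submodule.orthogonalProjectionOnto N (ε⁻¹ • A x)
        = ε⁻¹ • Submodule.orthogonalProjectionOnto N (A x) := by
      rw [← Complex.coe_smul, map_smul, Complex.coe_smul]
    rw [hAn, hy, map_add, hs]
    have : M (x : H) = M (n : H) + M (r : H) := by rw [← map_add, ← hsum]
    rw [this, map_add]
    abel
  have hJy : JN (Submodule.orthogonalProjectionOnto N y)
      = n + JN (Submodule.orthogonalProjectionOnto N (M (r : H))) := by
    rw [hPy, map_add, hJ1]
  have hdiff : (Binv - N.subtypeL.comp (JN.comp (Submodule.orthogonalProjectionOnto N))) y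
      = (r : H) - (JN (Submodule.orthogonalProjectionOnto N (M (r : H))) : H) := by
    change Binv y - ((JN (Submodule.orthogonalProjectionOnto N y) : N) : H) = _
    rw [hJy, hB1, Submodule.coe_add, hsum]
    abel
  rw [hdiff]
  have hJr : ‖(JN (Submodule.orthogonalProjectionOnto N (M (r : H))) : H)‖
      ≤ ‖M‖ * ‖(r : H)‖ / c := by
    refine (hJb _).trans ?_
    gcongr
    exact (Submodule.norm_orthogonalProjectionOnto_apply_le N _).trans (M.le_opNorm _)
  calc _ ≤ ‖(r : H)‖ + ‖M‖ * ‖(r : H)‖ / c := (norm_sub_le _ _).trans (by gcongr)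
    _ = (1 + ‖M‖ / c) * ‖(r : H)‖ := by ring
    _ ≤ (1 + ‖M‖ / c) * (C_R * (ε * ((1 + ‖M‖ / c) * ‖y‖))) := by gcongr
    _ = 1 * (C_R * (1 + ‖M‖ / c) ^ 2 * ε * ‖y‖) := by ring
    _ ≤ 2 * (C_R * (1 + ‖M‖ / c) ^ 2 * ε * ‖y‖) := by
      apply mul_le_mul_of_nonneg_right (by norm_num) (by positivity)
    _ = _ := by ring
end

section
/- (Main abstract fibre-homogenisation theorem, per fibre.) Assume Hypothesis (H). Then for every ε ∈ (0, 1/(2 C_R ‖M‖)), both B_ε := M + ε⁻¹ A and π_N M π_N + ε⁻¹ A (each with domain dom(A)) are boundedly invertible, and ‖ B_ε⁻¹ − (π_N M π_N + ε⁻¹ A)⁻¹ ‖ ≤ κ ε, where κ = 2 C_R (1 + ‖M‖/c)² + C_R. -/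
lemma aux_coer {H : Type*} [NormedAddCommGroup H] [InnerProductSpace ℂ H] (c : ℝ) (x y : H)
    (h : c * ‖x‖ ^ 2 ≤ (inner ℂ y x : ℂ).re) : c * ‖x‖ ≤ ‖y‖ := by
  have h1 : (inner ℂ y x : ℂ).re ≤ ‖y‖ * ‖x‖ := re_inner_le_norm (𝕜 := ℂ) y x
  rcases (norm_nonneg x).eq_or_lt with h0 | h0
  · rw [← h0]; simp
  · have : (c * ‖x‖) * ‖x‖ ≤ ‖y‖ * ‖x‖ := by nlinarith
    exact le_of_mul_le_mul_right this h0

lemma aux_skew {H : Type*} [NormedAddCommGroup H] [InnerProductSpace ℂ H] [CompleteSpace H]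
    (A : H →ₗ.[ℂ] H) (hA_dense : Dense (A.domain : Set H)) (hA_skew : A.adjoint = -A)
    (x : A.domain) : (inner ℂ (A x) (x : H) : ℂ).re = 0 := by
  have h := LinearPMap.adjoint_isFormalAdjoint hA_dense
  rw [hA_skew] at h
  have h1 : inner ℂ (-(A x)) (x : H) = inner ℂ (x : H) (A x) := h x x
  rw [inner_neg_left] at h1
  have h2 := congrArg Complex.re h1
  have h3 : (inner ℂ (x : H) (A x) : ℂ).re = (inner ℂ (A x) (x : H) : ℂ).re :=
    inner_re_symm (𝕜 := ℂ) _ _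
  rw [Complex.neg_re, h3] at h2
  linarith

lemma aux_re_smul {H : Type*} [NormedAddCommGroup H] [InnerProductSpace ℂ H]
    (s : ℝ) (x y : H) : (inner ℂ (s • x) y : ℂ).re = s * (inner ℂ x y : ℂ).re := by
  rw [← Complex.coe_smul, inner_smul_left]; simp

lemma aux_bound {H : Type*} [NormedAddCommGroup H] [InnerProductSpace ℂ H] [CompleteSpace H]
    (M : H →L[ℂ] H) (c : ℝ) 
    (hM : ∀ x : H, c * ‖x‖ ^ 2 ≤ (inner ℂ (M x) x : ℂ).re)
    (A : H →ₗ.[ℂ] H) (hA_dense : Dense (A.domain : Set H)) (hA_skew : A.adjoint = -A)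
    (s : ℝ) (x : A.domain) : c * ‖(x : H)‖ ≤ ‖M (x : H) + s • A x‖ := by
  apply aux_coer
  rw [inner_add_left, Complex.add_re, aux_re_smul, aux_skew A hA_dense hA_skew]
  simpa using hM x

lemma aux_surj {H : Type*} [NormedAddCommGroup H] [InnerProductSpace ℂ H] [CompleteSpace H]
    (M : H →L[ℂ] H) (c : ℝ) (hc : 0 < c)
    (hM : ∀ x : H, c * ‖x‖ ^ 2 ≤ (inner ℂ (M x) x : ℂ).re)
    (A : H →ₗ.[ℂ] H) (hA_dense : Dense (A.domain : Set H)) (hA_skew : A.adjoint = -A)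
    (s : ℝ) (hs : 0 < s) (y : H) : ∃ x : A.domain, M (x : H) + s • A x = y := by
  have hcl : A.adjoint.IsClosed := LinearPMap.adjoint_isClosed hA_dense
  have hG : IsClosed (A.graph : Set (H × H)) := by
    have h1 : IsClosed (A.adjoint.graph : Set (H × H)) := hcl
    have h2 : (A.graph : Set (H × H)) =
        (fun p : H × H => (p.1, -p.2)) ⁻¹' (A.adjoint.graph : Set (H × H)) := by
      ext ⟨a, b⟩
      rw [hA_skew]
      simp only [Set.mem_preimage, SetLike.mem_coe, LinearPMap.mem_graph_iff]
      constructor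
      · rintro ⟨z, h1, h2⟩
        exact ⟨z, h1, by rw [← h2]; rfl⟩
      · rintro ⟨z, h1, h2⟩
        exact ⟨z, h1, neg_injective h2⟩
    rw [h2]
    exact h1.preimage (by fun_prop)
  have : CompleteSpace A.graph := hG.completeSpace_coe
  let φ : A.graph →L[ℂ] H :=
    ((M ∘L ContinuousLinearMap.fst ℂ H H) + (s : ℂ) • ContinuousLinearMap.snd ℂ H H) ∘L
      A.graph.subtypeL
  have hφ : ∀ x : A.domain, ∀ h, φ ⟨((x : H), A x), h⟩ = M (x : H) + s • A x := by
    intro x h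
    simp [φ]
  have hb : ∀ g : A.graph, ‖g‖ ≤ ((c⁻¹ + s⁻¹ * (1 + ‖M‖ * c⁻¹)).toNNReal : ℝ) * ‖φ g‖ := by
    rintro ⟨⟨a, b⟩, hg⟩
    obtain ⟨z, rfl, rfl⟩ := (LinearPMap.mem_graph_iff A).1 hg
    rw [hφ]
    rw [Real.coe_toNNReal _ (by positivity)]
    have h1 := aux_bound M c hM A hA_dense hA_skew s z
    set f := M (z : H) + s • A z with hf
    have h2 : ‖(z : H)‖ ≤ c⁻¹ * ‖f‖ := by
      rw [inv_mul_eq_div, le_div_iff₀ hc]; linarith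
    have h3 : A z = s⁻¹ • (f - M (z : H)) := by
      rw [hf, add_sub_cancel_left, smul_smul, inv_mul_cancel₀ hs.ne', one_smul]
    have h4 : ‖A z‖ ≤ s⁻¹ * (1 + ‖M‖ * c⁻¹) * ‖f‖ := by
      rw [h3, norm_smul, Real.norm_of_nonneg (by positivity), mul_assoc]
      gcongr
      calc ‖f - M (z : H)‖ ≤ ‖f‖ + ‖M (z : H)‖ := norm_sub_le _ _
        _ ≤ ‖f‖ + ‖M‖ * (c⁻¹ * ‖f‖) := by
          gcongr
          exact (M.le_opNorm _).trans (by gcongr)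
        _ = _ := by ring
    have p1 : 0 ≤ c⁻¹ * ‖f‖ := by positivity
    have p2 : 0 ≤ s⁻¹ * (1 + ‖M‖ * c⁻¹) * ‖f‖ := by positivity
    change max ‖(z : H)‖ ‖A z‖ ≤ _
    rw [add_mul]
    exact max_le (by linarith) (by linarith)
  have hrc : IsClosed (Set.range φ) :=
    (φ.antilipschitz_of_bound hb).isClosed_range φ.uniformContinuous
  let K : Submodule ℂ H := LinearMap.range (φ : A.graph →ₗ[ℂ] H)
  have hK : IsClosed (K : Set H) := by
    have : (K : Set H) = Set.range φ := by ext; simp [K]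
    rw [this]; exact hrc
  have : CompleteSpace K := hK.completeSpace_coe
  have htop : K = ⊤ := by
    rw [← Submodule.orthogonal_eq_bot_iff, Submodule.eq_bot_iff]
    intro w hw
    have h1 : ∀ x : A.domain, inner ℂ w (M (x : H) + s • A x) = 0 := by
      intro x
      have hm : M (x : H) + s • A x ∈ K :=
        ⟨⟨((x : H), A x), A.mem_graph x⟩, hφ x _⟩
      exact Submodule.inner_left_of_mem_orthogonal hm hw
    have h2 : ∀ x : A.domain,
        inner ℂ (-((s⁻¹ : ℝ) • (ContinuousLinearMap.adjoint M w))) (x : H) = inner ℂ w (A x) := by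
      intro x
      have := h1 x
      rw [inner_add_right, ← Complex.coe_smul, inner_smul_right] at this
      rw [inner_neg_left, ← Complex.coe_smul, inner_smul_left,
        ContinuousLinearMap.adjoint_inner_left, Complex.conj_ofReal, Complex.ofReal_inv]
      have hs' : (s : ℂ) ≠ 0 := by exact_mod_cast hs.ne'
      field_simp
      linear_combination -this
    have h3 : w ∈ A.domain := by
      have : w ∈ A.adjoint.domain := LinearPMap.mem_adjoint_domain_of_exists w ⟨_, h2⟩
      rw [hA_skew] at this
      exact this
    have h4 := h1 ⟨w, h3⟩
    have h5 := aux_skew A hA_dense hA_skew ⟨w, h3⟩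
    have h6 : (inner ℂ (M w + s • A ⟨w, h3⟩) w : ℂ) = 0 := by
      rw [← inner_conj_symm, h4]; simp
    have h7 := hM w
    have h8 := congrArg Complex.re h6
    rw [inner_add_left, Complex.add_re, aux_re_smul, h5] at h8
    simp only [mul_zero, add_zero, Complex.zero_re] at h8
    rw [h8] at h7
    have : ‖w‖ ^ 2 ≤ 0 := by
      by_contra hh
      push Not at hh
      have := mul_pos hc hh
      linarith
    have h9 : ‖w‖ ^ 2 = 0 := le_antisymm this (by positivity)
    simpa using h9
  have hy : y ∈ K := htop ▸ Submodule.mem_top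
  obtain ⟨⟨⟨a, b⟩, hg⟩, h⟩ := hy
  obtain ⟨z, rfl, rfl⟩ := (LinearPMap.mem_graph_iff A).1 hg
  exact ⟨z, by rw [← hφ z hg]; exact h⟩

lemma aux_inv {H : Type*} [NormedAddCommGroup H] [InnerProductSpace ℂ H]
    (T : H →L[ℂ] H) (A : H →ₗ.[ℂ] H) (s : ℝ) (K : ℝ)
    (hb : ∀ x : A.domain, ‖(x : H)‖ ≤ K * ‖T (x : H) + s • A x‖)
    (hsurj : ∀ y : H, ∃ x : A.domain, T (x : H) + s • A x = y) :
    ∃ B : H →L[ℂ] H, ∀ x : A.domain, B (T (x : H) + s • A x) = x := by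
  let L : A.domain →ₗ[ℂ] H := (T : H →ₗ[ℂ] H) ∘ₗ A.domain.subtype + (s : ℂ) • A.toFun
  have hL : ∀ x : A.domain, L x = T (x : H) + s • A x := by
    intro x
    have : L x = T (x : H) + (s : ℂ) • A x := rfl
    rw [this, Complex.coe_smul]
  have hinj : Function.Injective L := by
    rw [injective_iff_map_eq_zero]
    intro x hx
    have := hb x
    rw [← hL, hx, norm_zero, mul_zero] at this
    exact Subtype.ext (norm_le_zero_iff.1 this)
  have hsur : Function.Surjective L := fun y => by
    obtain ⟨x, hx⟩ := hsurj y
    exact ⟨x, by rw [hL, hx]⟩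
  obtain ⟨e, he⟩ : ∃ e : A.domain ≃ₗ[ℂ] H, ∀ x, e x = L x :=
    ⟨LinearEquiv.ofBijective L ⟨hinj, hsur⟩, fun _ => rfl⟩
  refine ⟨LinearMap.mkContinuous (A.domain.subtype ∘ₗ (e.symm : H →ₗ[ℂ] A.domain)) K ?_, ?_⟩
  · intro y
    have h1 := hb (e.symm y)
    rw [← hL] at h1
    have h2 : L (e.symm y) = y := by rw [← he]; exact e.apply_symm_apply y
    rw [h2] at h1
    exact h1
  · intro x
    rw [← hL]
    have : e.symm (L x) = x := by rw [← he]; exact e.symm_apply_apply x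
    exact congrArg Subtype.val this



/-- **Main abstract fibre-homogenisation theorem, per fibre.**
Under Hypothesis (H), for every `ε ∈ (0, 1/(2 C_R ‖M‖))` both `B_ε = M + ε⁻¹ A` and
`π_N M π_N + ε⁻¹ A` (each with domain `dom A`) are boundedly invertible and
`‖B_ε⁻¹ − (π_N M π_N + ε⁻¹ A)⁻¹‖ ≤ κ ε` with `κ = 2 C_R (1 + ‖M‖/c)² + C_R`. -/
theorem statement8
    {H : Type*} [NormedAddCommGroup H] [InnerProductSpace ℂ H] [CompleteSpace H]
    -- `M` is a bounded operator with `Re⟪M x, x⟫ ≥ c ‖x‖²`, `c > 0`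
    (M : H →L[ℂ] H) (c : ℝ) (hc : 0 < c)
    (hM : ∀ x : H, c * ‖x‖ ^ 2 ≤ (inner ℂ (M x) x : ℂ).re)
    -- `A` is densely defined and skew-selfadjoint
    (A : H →ₗ.[ℂ] H) (hA_dense : Dense (A.domain : Set H)) (hA_skew : A.adjoint = -A)
    -- `N` is a closed subspace, `R = Nᗮ`
    (N : Submodule ℂ H) [CompleteSpace N]
    (C_R : ℝ) (hC_R : 0 < C_R)
    -- Hypothesis (H)(a): `N ⊆ dom A` and `A π_N` is bounded
    (hHa_sub : N ≤ A.domain)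
    (hHa_bdd : ∃ Ca : ℝ, ∀ x : A.domain, (x : H) ∈ N → ‖A x‖ ≤ Ca * ‖(x : H)‖)
    -- Hypothesis (H)(b): `π_R A ⊆ A π_R`
    (hHb : ∀ x : A.domain,
      ∃ hx : ((Submodule.orthogonalProjectionOnto Nᗮ (x : H) : H)) ∈ A.domain,
        (Submodule.orthogonalProjectionOnto Nᗮ (A x) : H)
          = A ⟨(Submodule.orthogonalProjectionOnto Nᗮ (x : H) : H), hx⟩)
    -- Hypothesis (H)(c): the compression `ι_R* A ι_R`, with domain `dom(A) ∩ R`, is a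
    -- bijection onto `R` with bounded inverse of norm at most `C_R`
    (hHc : ∃ J : Nᗮ →L[ℂ] Nᗮ, ‖J‖ ≤ C_R ∧
      (∀ (x : A.domain) (hx : (x : H) ∈ Nᗮ),
        J (Submodule.orthogonalProjectionOnto Nᗮ (A x)) = ⟨(x : H), hx⟩) ∧
      (∀ y : Nᗮ, ∃ (x : A.domain) (hx : (x : H) ∈ Nᗮ),
        Submodule.orthogonalProjectionOnto Nᗮ (A x) = y))
    (ε : ℝ) (hε : ε ∈ Set.Ioo (0 : ℝ) (1 / (2 * C_R * ‖M‖))) :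
    ∃ (Binv Pinv : H →L[ℂ] H),
      -- `Binv` is the bounded inverse of `B_ε = M + ε⁻¹ A`
      (∀ x : A.domain, Binv (M (x : H) + ε⁻¹ • A x) = x) ∧
      (∀ y : H, ∃ x : A.domain, M (x : H) + ε⁻¹ • A x = y) ∧
      -- `Pinv` is the bounded inverse of `π_N M π_N + ε⁻¹ A` (domain `dom A`)
      (∀ x : A.domain,
        Pinv ((Submodule.orthogonalProjectionOnto N (M ((Submodule.orthogonalProjectionOnto N (x : H) : H))) : H)
            + ε⁻¹ • A x) = x) ∧
      (∀ y : H, ∃ x : A.domain,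
        (Submodule.orthogonalProjectionOnto N (M ((Submodule.orthogonalProjectionOnto N (x : H) : H))) : H)
            + ε⁻¹ • A x = y) ∧
      -- the estimate with `κ = 2 C_R (1 + ‖M‖/c)² + C_R`
      ‖Binv - Pinv‖ ≤ (2 * C_R * (1 + ‖M‖ / c) ^ 2 + C_R) * ε := by

  obtain ⟨hε0, -⟩ := hε
  obtain ⟨J, hJn, hJ1, hJ2⟩ := hHc
  simp only [Submodule.coe_orthogonalProjectionOnto_apply] at hHb ⊢
  set P : H →L[ℂ] H := N.starProjection with hPdef
  set Q : H →L[ℂ] H := Nᗮ.starProjection with hQdef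
  set s : ℝ := ε⁻¹ with hs_def
  have hs : 0 < s := inv_pos.2 hε0
  have hsε : s * ε = 1 := inv_mul_cancel₀ hε0.ne'
  have hPQ : ∀ x, P x + Q x = x := fun x => N.starProjection_add_starProjection_orthogonal x
  have hPmem : ∀ x, P x ∈ N := fun x => by simp [hPdef]
  have hQmem : ∀ x, Q x ∈ Nᗮ := fun x => Submodule.starProjection_apply_mem _ x
  have hQid : ∀ x ∈ Nᗮ, Q x = x := fun x hx => Submodule.starProjection_eq_self_iff.2 hx
  have hPid : ∀ x ∈ N, P x = x := fun x hx => Submodule.starProjection_eq_self_iff.2 hx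
  have hPR : ∀ x ∈ Nᗮ, P x = 0 := fun x hx => by
    have := hPQ x
    rw [hQid x hx] at this
    simpa using this
  have hQN : ∀ x ∈ N, Q x = 0 := fun x hx => by
    have := hPQ x
    rw [hPid x hx] at this
    simpa using this
  have hPn : ∀ x, ‖P x‖ ≤ ‖x‖ := fun x => N.norm_starProjection_apply_le x
  have hQn : ∀ x, ‖Q x‖ ≤ ‖x‖ := fun x => Nᗮ.norm_starProjection_apply_le x
  have hPin : ∀ x y, inner ℂ (P x) (P y) = inner ℂ x (P y) := fun x y => by
    conv_rhs => rw [← hPQ x, inner_add_left,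
      Submodule.inner_left_of_mem_orthogonal (hPmem y) (hQmem x), add_zero]
  have hAQ : ∀ x : A.domain, ∃ z : A.domain, (z : H) = Q x ∧ A z = Q (A x) := fun x => by
    obtain ⟨h, h'⟩ := hHb x
    exact ⟨⟨_, h⟩, rfl, h'.symm⟩
  have hAP : ∀ x : A.domain, ∃ z : A.domain, (z : H) = P x ∧ A z = P (A x) := fun x => by
    obtain ⟨z, h1, h2⟩ := hAQ x
    refine ⟨x - z, ?_, ?_⟩
    · rw [Submodule.coe_sub, h1, sub_eq_iff_eq_add, hPQ]
    · rw [A.map_sub, h2, sub_eq_iff_eq_add, hPQ]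
  have hAR : ∀ x : A.domain, (x : H) ∈ Nᗮ → Q (A x) = A x := fun x hx => by
    obtain ⟨z, h1, h2⟩ := hAQ x
    rw [hQid _ hx] at h1
    have : z = x := Subtype.ext h1
    rw [← h2, this]
  have hR1 : ∀ x : A.domain, (x : H) ∈ Nᗮ → ‖(x : H)‖ ≤ C_R * ‖A x‖ := fun x hx => by
    have h := hJ1 x hx
    have h1 : ‖(x : H)‖ = ‖J (Submodule.orthogonalProjectionOnto Nᗮ (A x))‖ := by rw [h]; rfl
    rw [h1]
    refine (J.le_opNorm _).trans ?_
    gcongr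
    exact Submodule.norm_orthogonalProjectionOnto_apply_le _ _
  have hR2 : ∀ y ∈ Nᗮ, ∃ x : A.domain, (x : H) ∈ Nᗮ ∧ A x = y := fun y hy => by
    obtain ⟨x, hx, h⟩ := hJ2 ⟨y, hy⟩
    refine ⟨x, hx, ?_⟩
    rw [← hAR x hx]
    exact congrArg Subtype.val h
  -- bound on R-components
  have hRb : ∀ x : A.domain, ∀ g : H, s • Q (A x) = g → ‖Q x‖ ≤ C_R * ε * ‖g‖ := by
    intro x g hg
    obtain ⟨z, h1, h2⟩ := hAQ x
    have h3 := hR1 z (h1 ▸ hQmem _)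
    rw [h1, h2] at h3
    have h4 : Q (A x) = ε • g := by
      rw [← hg, smul_smul, mul_comm, hsε, one_smul]
    rw [h4, norm_smul, Real.norm_of_nonneg hε0.le] at h3
    linarith
  -- bound on N-components
  have hNb : ∀ x : A.domain, ∀ g : H, P (M (P x)) + s • P (A x) = g → c * ‖P x‖ ≤ ‖g‖ := by
    intro x g hg
    obtain ⟨z, h1, h2⟩ := hAP x
    apply aux_coer
    rw [← hg, inner_add_left, Complex.add_re, aux_re_smul, hPin]
    have := aux_skew A hA_dense hA_skew z
    rw [h1, h2] at this
    rw [this]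
    simpa using hM (P x)
  have hPP : ∀ x, P (P x) = P x := fun x => hPid _ (hPmem x)
  have hQP : ∀ x, Q (P x) = 0 := fun x => hQN _ (hPmem x)
  have hPQ0 : ∀ x, P (Q x) = 0 := fun x => hPR _ (hQmem x)
  have hPs : ∀ x, P (s • x) = s • P x := fun x => by
    rw [← Complex.coe_smul, map_smul, Complex.coe_smul]
  have hQs : ∀ x, Q (s • x) = s • Q x := fun x => by
    rw [← Complex.coe_smul, map_smul, Complex.coe_smul]
  have hBs := aux_surj M c hc hM A hA_dense hA_skew s hs
  have hBb := aux_bound M c hM A hA_dense hA_skew s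
  have hPs' : ∀ y : H, ∃ x : A.domain, P (M (P x)) + s • A x = y := by
    intro y
    let T : H →L[ℂ] H := P ∘L M ∘L P + (c : ℂ) • Q
    have hTa : ∀ x, T x = P (M (P x)) + (c : ℝ) • Q x := fun x => by simp [T]
    have hT : ∀ x : H, c * ‖x‖ ^ 2 ≤ (inner ℂ (T x) x : ℂ).re := by
      intro x
      have e1 : inner ℂ (P (M (P x))) x = inner ℂ (M (P x)) (P x) := by
        rw [← hPin]
        conv_lhs => rw [← hPQ x, inner_add_right,
          Submodule.inner_right_of_mem_orthogonal (hPmem _) (hQmem x), add_zero]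
        simp only [map_add, hPP, hPQ0, add_zero]
      have e2 : inner ℂ (Q x) x = inner ℂ (Q x) (Q x) := by
        conv_lhs => rw [← hPQ x, inner_add_right]
        rw [hPQ x, Submodule.inner_left_of_mem_orthogonal (hPmem x) (hQmem _), zero_add]
      have e3 : (inner ℂ (Q x) (Q x) : ℂ).re = ‖Q x‖ ^ 2 := by
        rw [inner_self_eq_norm_sq_to_K]; norm_cast
      have e4 : ‖x‖ ^ 2 = ‖P x‖ ^ 2 + ‖Q x‖ ^ 2 := by
        have := norm_add_sq_eq_norm_sq_add_norm_sq_of_inner_eq_zero (𝕜 := ℂ) (P x) (Q x)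
          (Submodule.inner_right_of_mem_orthogonal (hPmem x) (hQmem x))
        rw [hPQ] at this
        nlinarith
      rw [hTa, inner_add_left, Complex.add_re, aux_re_smul, e1, e2, e3, e4]
      have := hM (P x)
      linarith
    obtain ⟨w, hw⟩ := aux_surj T c hc hT A hA_dense hA_skew s hs y
    obtain ⟨z, h1, h2⟩ := hAP w
    obtain ⟨r, h3, h4⟩ := hR2 (ε • Q y) (by
      rw [← Complex.coe_smul]; exact Submodule.smul_mem _ _ (hQmem y))
    refine ⟨z + r, ?_⟩
    have h5 := congrArg P hw
    have hPc : P (c • Q (w : H)) = 0 := by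
      rw [← Complex.coe_smul, map_smul, hPQ0, smul_zero]
    rw [hTa, map_add, map_add, hPP, hPs, hPc, add_zero] at h5
    rw [Submodule.coe_add, map_add, h1, hPP, hPR _ h3, add_zero, A.map_add, h2, h4, smul_add,
      ← add_assoc, h5, smul_smul, hsε, one_smul, hPQ]
  have hPb : ∀ x : A.domain, ‖(x : H)‖ ≤ (c⁻¹ + C_R * ε) * ‖P (M (P x)) + s • A x‖ := by
    intro x
    set g := P (M (P x)) + s • A x with hg
    have h1 := hNb x (P g) (by rw [hg, map_add, hPP, hPs])
    have h2 := hRb x (Q g) (by rw [hg, map_add, hQP, hQs, zero_add])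
    have h3 : ‖P x‖ ≤ c⁻¹ * ‖g‖ := by
      rw [inv_mul_eq_div, le_div_iff₀ hc]; linarith [hPn g]
    have h4 : ‖Q x‖ ≤ C_R * ε * ‖g‖ := h2.trans (by gcongr; exact hQn g)
    calc ‖(x : H)‖ = ‖P x + Q x‖ := by rw [hPQ]
      _ ≤ ‖P x‖ + ‖Q x‖ := norm_add_le _ _
      _ ≤ _ := by rw [add_mul]; linarith
  obtain ⟨Binv, hB⟩ := aux_inv M A s c⁻¹ (fun x => by
    rw [inv_mul_eq_div, le_div_iff₀ hc]; linarith [hBb x]) hBs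
  obtain ⟨Pinv, hP⟩ := aux_inv (P ∘L M ∘L P) A s _ hPb hPs'
  refine ⟨Binv, Pinv, hB, hBs, hP, hPs', ?_⟩
  refine ContinuousLinearMap.opNorm_le_bound _ (by positivity) fun f => ?_
  obtain ⟨u, hu⟩ := hBs f
  obtain ⟨v, hv⟩ := hPs' f
  have hBf : Binv f = u := by rw [← hu, hB]
  have hPf : Pinv f = v := by rw [← hv]; exact hP v
  rw [sub_apply, hBf, hPf]
  set t := ‖M‖ / c with ht
  have ht0 : 0 ≤ t := by positivity
  have hMt : ‖M‖ = t * c := by rw [ht]; field_simp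
  have hMu : ‖M (u : H)‖ ≤ t * ‖f‖ := by
    have h1 := hBb u
    rw [hu] at h1
    calc ‖M (u : H)‖ ≤ ‖M‖ * ‖(u : H)‖ := M.le_opNorm _
      _ = t * (c * ‖(u : H)‖) := by rw [hMt]; ring
      _ ≤ _ := by gcongr
  have hsd : s • A (u - v) = P (M (P v)) - M u := by
    rw [A.map_sub, smul_sub, ← sub_eq_zero]
    have := hu.trans hv.symm
    rw [← sub_eq_zero] at this
    rw [← this]; abel
  have hQd : ‖Q ((u - v : A.domain) : H)‖ ≤ C_R * ε * (t * ‖f‖) := by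
    have := hRb (u - v) (-Q (M u)) (by rw [← hQs, hsd, map_sub, hQP, zero_sub])
    rw [norm_neg] at this
    refine this.trans ?_
    gcongr
    exact (hQn _).trans hMu
  have hQu : ‖Q (u : H)‖ ≤ C_R * ε * ((1 + t) * ‖f‖) := by
    have := hRb u (Q (f - M u)) (by rw [← hQs, ← hu, add_sub_cancel_left])
    refine this.trans ?_
    gcongr
    calc _ ≤ ‖f - M u‖ := hQn _
      _ ≤ ‖f‖ + ‖M u‖ := norm_sub_le _ _
      _ ≤ _ := by linarith
  have hPd : ‖P ((u - v : A.domain) : H)‖ ≤ t * ‖Q (u : H)‖ := by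
    have := hNb (u - v) (-P (M (Q u))) (by
      rw [← hPs, hsd, map_sub, hPP, Submodule.coe_sub, map_sub, map_sub, map_sub]
      have h0 : P (M (u : H)) = P (M (P u)) + P (M (Q u)) := by
        rw [← map_add, ← map_add, hPQ]
      rw [h0]
      abel)
    rw [norm_neg] at this
    have h2 : c * ‖P ((u - v : A.domain) : H)‖ ≤ c * (t * ‖Q (u : H)‖) := by
      calc _ ≤ _ := this
        _ ≤ ‖M (Q u)‖ := hPn _
        _ ≤ ‖M‖ * ‖Q (u : H)‖ := M.le_opNorm _
        _ = _ := by rw [hMt]; ring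
    exact le_of_mul_le_mul_left h2 hc
  calc ‖(u : H) - v‖ = ‖P ((u - v : A.domain) : H) + Q ((u - v : A.domain) : H)‖ := by
        rw [hPQ]; rfl
    _ ≤ t * (C_R * ε * ((1 + t) * ‖f‖)) + C_R * ε * (t * ‖f‖) :=
        (norm_add_le _ _).trans (add_le_add (hPd.trans (by gcongr)) hQd)
    _ = (C_R * (t * (2 + t))) * ε * ‖f‖ := by ring
    _ ≤ _ := by
        gcongr
        nlinarith [mul_nonneg hC_R.le ht0, mul_nonneg hC_R.le (mul_nonneg ht0 ht0)]
end

section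
/- Assume Hypothesis (H). Then for every ε > 0, the operator P_ε := π_N M π_N + ε⁻¹ A, with domain dom(A), is boundedly invertible, and its inverse satisfies the identities π_R P_ε⁻¹ = ε ι_R (ι_R* A ι_R)⁻¹ ι_R* and π_N P_ε⁻¹ = ι_N B_{ε,N}⁻¹ ι_N*; consequently ‖P_ε⁻¹‖ ≤ max{1/c, ε C_R}. -/
open Submodule in
theorem aux10
    {H : Type*} [NormedAddCommGroup H] [InnerProductSpace ℂ H] [CompleteSpace H]
    (M : H →L[ℂ] H) (c : ℝ) (hc : 0 < c)
    (hM : ∀ x : H, c * ‖x‖ ^ 2 ≤ (inner ℂ (M x) x : ℂ).re)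
    (A : H →ₗ.[ℂ] H) (hA_dense : Dense (A.domain : Set H)) (hA_skew : A.adjoint = -A)
    (N : Submodule ℂ H) [CompleteSpace N]
    (p : H →L[ℂ] N) (q : H →L[ℂ] Nᗮ)
    (hpq : ∀ x : H, (p x : H) + (q x : H) = x)
    (hpn : ∀ n : N, p (n : H) = n) (hpr : ∀ r : Nᗮ, p (r : H) = 0)
    (hqn : ∀ n : N, q (n : H) = 0) (hqr : ∀ r : Nᗮ, q (r : H) = r)
    (hin : ∀ (x : H) (n : N), inner ℂ (p x) n = inner ℂ x (n : H))
    (hpyth : ∀ x : H, ‖x‖ ^ 2 = ‖p x‖ ^ 2 + ‖q x‖ ^ 2)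
    (C_R : ℝ) (hC_R : 0 < C_R)
    (hHa_sub : N ≤ A.domain)
    (hHa_bdd : ∃ Ca : ℝ, ∀ x : A.domain, (x : H) ∈ N → ‖A x‖ ≤ Ca * ‖(x : H)‖)
    (hHb : ∀ x : A.domain,
      ∃ hx : (q (x : H) : H) ∈ A.domain, (q (A x) : H) = A ⟨(q (x : H) : H), hx⟩)
    (hHc : ∃ J : Nᗮ →L[ℂ] Nᗮ, ‖J‖ ≤ C_R ∧
      (∀ (x : A.domain) (hx : (x : H) ∈ Nᗮ), J (q (A x)) = ⟨(x : H), hx⟩) ∧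
      (∀ y : Nᗮ, ∃ (x : A.domain) (hx : (x : H) ∈ Nᗮ), q (A x) = y))
    (ε : ℝ) (hε : 0 < ε) :
    ∃ Pinv : H →L[ℂ] H,
      (∀ x : A.domain, Pinv ((p (M (p (x : H) : H)) : H) + ε⁻¹ • A x) = x) ∧
      (∀ y : H, ∃ x : A.domain, (p (M (p (x : H) : H)) : H) + ε⁻¹ • A x = y) ∧
      (∀ J : Nᗮ →L[ℂ] Nᗮ,
        ((∀ (x : A.domain) (hx : (x : H) ∈ Nᗮ), J (q (A x)) = ⟨(x : H), hx⟩) ∧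
          (∀ y : Nᗮ, ∃ (x : A.domain) (hx : (x : H) ∈ Nᗮ), q (A x) = y)) →
        ∀ y : H, (q (Pinv y) : H) = ε • (J (q y) : H)) ∧
      (∀ JN : N →L[ℂ] N,
        ((∀ x : N, JN (p (M (x : H)) + ε⁻¹ • p (A ⟨(x : H), hHa_sub x.2⟩)) = x) ∧
          (∀ y : N, ∃ x : N, p (M (x : H)) + ε⁻¹ • p (A ⟨(x : H), hHa_sub x.2⟩) = y)) →
        ∀ y : H, (p (Pinv y) : H) = (JN (p y) : H)) ∧
      ‖Pinv‖ ≤ max (1 / c) (ε * C_R) := by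
  obtain ⟨J, hJn, hJ1, hJ2⟩ := hHc
  obtain ⟨Ca, hCa⟩ := hHa_bdd
  have hε0 : ε ≠ 0 := ne_of_gt hε
  -- skewness: the real part of `⟪A x, x⟫` vanishes
  have hskew : ∀ x : A.domain, (inner ℂ (A x) (x : H) : ℂ).re = 0 := by
    intro x
    have h := A.adjoint_isFormalAdjoint hA_dense
    rw [hA_skew] at h
    have h1 : inner ℂ (-(A x)) (x : H) = inner ℂ (x : H) (A x) := h x x
    rw [inner_neg_left] at h1
    have h2 := congrArg Complex.re h1
    have h3 : (inner ℂ (x : H) (A x) : ℂ).re = (inner ℂ (A x) (x : H) : ℂ).re :=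
      inner_re_symm (𝕜 := ℂ) (x : H) (A x)
    rw [h3, Complex.neg_re] at h2
    linarith
  -- the compression of `A` to `N`
  let AN0 : N →ₗ[ℂ] N := p.toLinearMap ∘ₗ A.toFun ∘ₗ Submodule.inclusion hHa_sub
  have hAN0 : ∀ n : N, AN0 n = p (A ⟨(n : H), hHa_sub n.2⟩) := fun n => rfl
  let AN : N →L[ℂ] N := AN0.mkContinuous (‖p‖ * Ca) (by
    intro n
    rw [hAN0, mul_assoc]
    exact (p.le_opNorm _).trans
      (mul_le_mul_of_nonneg_left (hCa ⟨(n : H), hHa_sub n.2⟩ n.2) (norm_nonneg _)))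
  let B : N →L[ℂ] N := p ∘L M ∘L N.subtypeL + ε⁻¹ • AN
  have hB : ∀ n : N, B n = p (M (n : H)) + ε⁻¹ • p (A ⟨(n : H), hHa_sub n.2⟩) := fun n => rfl
  have hBc : ∀ n : N, c * ‖n‖ ^ 2 ≤ (inner ℂ (B n) n : ℂ).re := by
    intro n
    have h1 := hskew ⟨(n : H), hHa_sub n.2⟩
    have h2 := hM (n : H)
    rw [hB, inner_add_left, Complex.add_re, hin, ← Complex.coe_smul, inner_smul_left, hin, Complex.conj_ofReal]
    simp only [Complex.re_ofReal_mul]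
    rw [h1]
    simpa using h2
  have hBn : ∀ n : N, c * ‖n‖ ≤ ‖B n‖ := by
    intro n
    rcases eq_or_ne n 0 with rfl | hn
    · simp
    have h1 := hBc n
    have h2 : (inner ℂ (B n) n : ℂ).re ≤ ‖B n‖ * ‖n‖ := re_inner_le_norm (𝕜 := ℂ) (B n) n
    have h3 : 0 < ‖n‖ := norm_pos_iff.2 hn
    refine le_of_mul_le_mul_right ?_ h3
    nlinarith
  have hBu : IsUnit B := by
    refine ContinuousLinearMap.isUnit_of_forall_le_norm_inner_map B (c := ⟨c, hc.le⟩) hc ?_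
    intro x
    have h1 := hBc x
    have h2 : (inner ℂ (B x) x : ℂ).re ≤ ‖(inner ℂ (B x) x : ℂ)‖ := Complex.re_le_norm _
    change ‖x‖ ^ 2 * c ≤ _
    linarith
  obtain ⟨u, hu⟩ := hBu
  let G : N →L[ℂ] N := ((u⁻¹ : (N →L[ℂ] N)ˣ) : N →L[ℂ] N)
  have hGB : ∀ n, G (B n) = n := by
    intro n
    have : G * B = 1 := by rw [← hu]; exact u.inv_mul
    exact congrArg (fun T : N →L[ℂ] N => T n) this
  have hBG : ∀ n, B (G n) = n := by
    intro n
    have : B * G = 1 := by rw [← hu]; exact u.mul_inv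
    exact congrArg (fun T : N →L[ℂ] N => T n) this
  have hGn : ∀ n, ‖G n‖ ≤ 1 / c * ‖n‖ := by
    intro n
    have := hBn (G n)
    rw [hBG] at this
    rw [one_div, inv_mul_eq_div, le_div_iff₀ hc]
    linarith
  -- reduction properties of `A`
  have hAq : ∀ x : A.domain, (x : H) ∈ N → q (A x) = 0 := by
    intro x hx
    obtain ⟨h1, h2⟩ := hHb x
    have h3 : q (x : H) = 0 := hqn ⟨x, hx⟩
    have h4 : (⟨(q (x : H) : H), h1⟩ : A.domain) = 0 := Subtype.ext (by simp [h3])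
    rw [h4, A.map_zero] at h2
    exact Subtype.ext (by simpa using h2)
  have hAr : ∀ x : A.domain, (x : H) ∈ Nᗮ → (q (A x) : H) = A x := by
    intro x hx
    obtain ⟨h1, h2⟩ := hHb x
    have h3 : q (x : H) = ⟨x, hx⟩ := hqr ⟨x, hx⟩
    rw [h2]
    congr 1
    exact Subtype.ext (by simp [h3])
  let Pinv : H →L[ℂ] H := N.subtypeL ∘L G ∘L p + ε • (Nᗮ.subtypeL ∘L J ∘L q)
  have hP : ∀ y, Pinv y = (G (p y) : H) + ε • (J (q y) : H) := fun y => rfl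
  have hPp : ∀ y, p (Pinv y) = G (p y) := by
    intro y
    rw [hP, map_add, hpn]
    have : p (ε • (J (q y) : H)) = 0 := by
      have := hpr (ε • J (q y))
      simpa using this
    rw [this, add_zero]
  have hPq : ∀ y, q (Pinv y) = ε • J (q y) := by
    intro y
    rw [hP, map_add, hqn, zero_add]
    exact hqr (ε • J (q y))
  -- the two components of `P x`
  have hdec : ∀ x : A.domain, ∃ r : A.domain, (r : H) = q (x : H) ∧
      A x = A ⟨(p (x : H) : H), hHa_sub (p (x : H)).2⟩ + A r := by
    intro x
    obtain ⟨h1, h2⟩ := hHb x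
    refine ⟨⟨_, h1⟩, rfl, ?_⟩
    rw [← A.map_add]
    congr 1
    exact Subtype.ext (hpq x).symm
  have hext : ∀ x y : H, p x = p y → q x = q y → x = y := by
    intro x y h1 h2
    rw [← hpq x, ← hpq y, h1, h2]
  have hsm : ∀ (x : H), p (ε⁻¹ • x) = ε⁻¹ • p x := fun x => ContinuousLinearMap.map_smul_of_tower p _ _
  have hsq : ∀ (x : H), q (ε⁻¹ • x) = ε⁻¹ • q x := fun x => ContinuousLinearMap.map_smul_of_tower q _ _
  have hpP : ∀ x : A.domain, p ((p (M (p (x : H) : H)) : H) + ε⁻¹ • A x) = B (p (x : H)) := by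
    intro x
    obtain ⟨r, hr, hx⟩ := hdec x
    have h1 : p (A r) = 0 := by
      rw [← hAr r (hr ▸ (q (x : H)).2), hpr]
    rw [map_add, hpn, hB, hsm, hx, map_add, h1, add_zero]
  have hqP : ∀ x : A.domain, ∃ r : A.domain, (r : H) = q (x : H) ∧
      q ((p (M (p (x : H) : H)) : H) + ε⁻¹ • A x) = ε⁻¹ • q (A r) := by
    intro x
    obtain ⟨r, hr, hx⟩ := hdec x
    refine ⟨r, hr, ?_⟩
    rw [map_add, hqn, zero_add, hsq, hx, map_add, hAq _ (p (x : H)).2, zero_add]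
  refine ⟨Pinv, ?_, ?_, ?_, ?_, ?_⟩
  · intro x
    obtain ⟨r, hr, hx⟩ := hqP x
    have hrm : (r : H) ∈ Nᗮ := hr ▸ (q (x : H)).2
    apply hext
    · rw [hPp, hpP, hGB]
    · rw [hPq, hx, ContinuousLinearMap.map_smul_of_tower J, smul_smul, mul_inv_cancel₀ hε0, one_smul, hJ1 r hrm]
      exact Subtype.ext hr
  · intro y
    obtain ⟨r, hr, hry⟩ := hJ2 (q y)
    let n := G (p y)
    let r' : A.domain := (ε : ℂ) • r
    let x : A.domain := ⟨(n : H), hHa_sub n.2⟩ + r'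
    have hr' : (r' : H) ∈ Nᗮ := Nᗮ.smul_mem _ hr
    have hxv : (x : H) = (n : H) + (r' : H) := rfl
    have hpx : p (x : H) = n := by
      rw [hxv, map_add, hpn, hpr ⟨_, hr'⟩, add_zero]
    have hqx : q (x : H) = ⟨_, hr'⟩ := by
      rw [hxv, map_add, hqn, zero_add]; exact hqr ⟨_, hr'⟩
    refine ⟨x, hext _ _ ?_ ?_⟩
    · rw [hpP, hpx, hBG]
    · obtain ⟨s, hs, hsx⟩ := hqP x
      have h1 : s = r' := Subtype.ext (by rw [hs, hqx])
      rw [hsx, h1, A.map_smul, map_smul, hry, ← Complex.coe_smul, smul_smul]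
      simp [hε0]
  · intro J' ⟨_, _⟩ y
    rename_i h1 h2
    rw [hPq]
    obtain ⟨r, hr, hry⟩ := hJ2 (q y)
    rw [← hry, hJ1 r hr, h1 r hr]
    rfl
  · intro JN ⟨h1, h2⟩ y
    rw [hPp]
    have h3 := h1 (G (p y))
    rw [← hB, hBG] at h3
    rw [h3]
  · have hm0 : 0 ≤ max (1 / c) (ε * C_R) := le_max_of_le_left (by positivity)
    refine ContinuousLinearMap.opNorm_le_bound _ hm0 ?_
    intro y
    refine (pow_le_pow_iff_left₀ (norm_nonneg _) (by positivity) two_ne_zero).1 ?_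
    rw [mul_pow, hpyth (Pinv y), hpyth y, hPp, hPq, mul_add, ← mul_pow, ← mul_pow]
    have h1 : ‖G (p y)‖ ≤ max (1 / c) (ε * C_R) * ‖p y‖ :=
      (hGn _).trans (mul_le_mul_of_nonneg_right (le_max_left _ _) (norm_nonneg _))
    have h2 : ‖ε • J (q y)‖ ≤ max (1 / c) (ε * C_R) * ‖q y‖ := by
      rw [norm_smul, Real.norm_of_nonneg hε.le]
      have h3 : ‖J (q y)‖ ≤ C_R * ‖q y‖ := J.le_of_opNorm_le hJn _
      calc ε * ‖J (q y)‖ ≤ ε * (C_R * ‖q y‖) := by gcongr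
        _ = ε * C_R * ‖q y‖ := by ring
        _ ≤ _ := mul_le_mul_of_nonneg_right (le_max_right _ _) (norm_nonneg _)
    gcongr


/-- Under Hypothesis (H), for every `ε > 0` the operator
`P_ε = π_N M π_N + ε⁻¹ A` (domain `dom A`) is boundedly invertible, its inverse satisfies
`π_R P_ε⁻¹ = ε ι_R (ι_R* A ι_R)⁻¹ ι_R*` and `π_N P_ε⁻¹ = ι_N B_{ε,N}⁻¹ ι_N*`, and
`‖P_ε⁻¹‖ ≤ max{1/c, ε C_R}`. -/
theorem statement10
    {H : Type*} [NormedAddCommGroup H] [InnerProductSpace ℂ H] [CompleteSpace H]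
    -- `M` is a bounded operator with `Re⟪M x, x⟫ ≥ c ‖x‖²`, `c > 0`
    (M : H →L[ℂ] H) (c : ℝ) (hc : 0 < c)
    (hM : ∀ x : H, c * ‖x‖ ^ 2 ≤ (inner ℂ (M x) x : ℂ).re)
    -- `A` is densely defined and skew-selfadjoint
    (A : H →ₗ.[ℂ] H) (hA_dense : Dense (A.domain : Set H)) (hA_skew : A.adjoint = -A)
    -- `N` is a closed subspace, `R = Nᗮ`
    (N : Submodule ℂ H) [CompleteSpace N]
    (C_R : ℝ) (hC_R : 0 < C_R)
    -- Hypothesis (H)(a): `N ⊆ dom A` and `A π_N` is bounded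
    (hHa_sub : N ≤ A.domain)
    (hHa_bdd : ∃ Ca : ℝ, ∀ x : A.domain, (x : H) ∈ N → ‖A x‖ ≤ Ca * ‖(x : H)‖)
    -- Hypothesis (H)(b): `π_R A ⊆ A π_R`
    (hHb : ∀ x : A.domain,
      ∃ hx : ((Submodule.orthogonalProjection Nᗮ (x : H) : H)) ∈ A.domain,
        (Submodule.orthogonalProjection Nᗮ (A x) : H)
          = A ⟨(Submodule.orthogonalProjection Nᗮ (x : H) : H), hx⟩)
    -- Hypothesis (H)(c): the compression `ι_R* A ι_R`, with domain `dom(A) ∩ R`, is a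
    -- bijection onto `R` with bounded inverse of norm at most `C_R`
    (hHc : ∃ J : Nᗮ →L[ℂ] Nᗮ, ‖J‖ ≤ C_R ∧
      (∀ (x : A.domain) (hx : (x : H) ∈ Nᗮ),
        J (Submodule.orthogonalProjection Nᗮ (A x)) = ⟨(x : H), hx⟩) ∧
      (∀ y : Nᗮ, ∃ (x : A.domain) (hx : (x : H) ∈ Nᗮ),
        Submodule.orthogonalProjection Nᗮ (A x) = y))
    (ε : ℝ) (hε : 0 < ε) :
    ∃ Pinv : H →L[ℂ] H,
      -- `Pinv` is the bounded inverse of `P_ε = π_N M π_N + ε⁻¹ A`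
      (∀ x : A.domain,
        Pinv ((Submodule.orthogonalProjection N (M ((Submodule.orthogonalProjection N (x : H) : H))) : H)
            + ε⁻¹ • A x) = x) ∧
      (∀ y : H, ∃ x : A.domain,
        (Submodule.orthogonalProjection N (M ((Submodule.orthogonalProjection N (x : H) : H))) : H)
            + ε⁻¹ • A x = y) ∧
      -- `π_R P_ε⁻¹ = ε ι_R (ι_R* A ι_R)⁻¹ ι_R*`, for the inverse `J` of the compression
      (∀ J : Nᗮ →L[ℂ] Nᗮ,
        ((∀ (x : A.domain) (hx : (x : H) ∈ Nᗮ),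
            J (Submodule.orthogonalProjection Nᗮ (A x)) = ⟨(x : H), hx⟩) ∧
          (∀ y : Nᗮ, ∃ (x : A.domain) (hx : (x : H) ∈ Nᗮ),
            Submodule.orthogonalProjection Nᗮ (A x) = y)) →
        ∀ y : H, (Submodule.orthogonalProjection Nᗮ (Pinv y) : H)
            = ε • (J (Submodule.orthogonalProjection Nᗮ y) : H)) ∧
      -- `π_N P_ε⁻¹ = ι_N B_{ε,N}⁻¹ ι_N*`, for the inverse `JN` of `B_{ε,N}`
      (∀ JN : N →L[ℂ] N,
        ((∀ x : N,
            JN (Submodule.orthogonalProjection N (M (x : H))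
                + ε⁻¹ • Submodule.orthogonalProjection N (A ⟨(x : H), hHa_sub x.2⟩)) = x) ∧
          (∀ y : N, ∃ x : N,
            Submodule.orthogonalProjection N (M (x : H))
                + ε⁻¹ • Submodule.orthogonalProjection N (A ⟨(x : H), hHa_sub x.2⟩) = y)) →
        ∀ y : H, (Submodule.orthogonalProjection N (Pinv y) : H)
            = (JN (Submodule.orthogonalProjection N y) : H)) ∧
      -- consequently `‖P_ε⁻¹‖ ≤ max{1/c, ε C_R}`
      ‖Pinv‖ ≤ max (1 / c) (ε * C_R) := by
  exact aux10 M c hc hM A hA_dense hA_skew N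
    (Submodule.orthogonalProjectionOnto N) (Submodule.orthogonalProjectionOnto Nᗮ)
    (fun x => Submodule.starProjection_add_starProjection_orthogonal (K := N) x)
    (fun n => by simp) (fun r => by simp) (fun n => by simp) (fun r => by simp)
    (fun x n => by simp)
    (fun x => Submodule.norm_sq_eq_add_norm_sq_projection x N)
    C_R hC_R hHa_sub hHa_bdd hHb hHc ε hε
end

section
/- (Stability of the limit fibre problem under perturbation of the coefficient.) Let n, d ≥ 1, ν > 0, κ₀ ≥ 0. Let a_θ, a₀ : ℂ^{n×d} → ℂ^{n×d} be linear maps with Re⟨a_θ X, X⟩ ≥ ν ‖X‖² and Re⟨a₀ X, X⟩ ≥ ν ‖X‖² for all X ∈ ℂ^{n×d}, and let m : ℂⁿ → ℂⁿ be a linear map with Re⟨m β, β⟩ ≥ ν ‖β‖² for all β ∈ ℂⁿ. Let θ ∈ ℝ^d, ε > 0, and assume ‖a₀ − a_θ‖ ≤ κ₀ |θ| (operator norm). Suppose β, β' ∈ ℂⁿ satisfy ε⁻² a_θ(β ⊗ θ) θ + m β = f and ε⁻² a₀(β' ⊗ θ) θ + m β' = f for some f ∈ ℂⁿ. Then ‖β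 − β'‖ ≤ C ε ‖f‖, where C = κ₀ · sup_{t ≥ 0} t³ / (ν² (1 + t²)²); in particular C depends only on κ₀ and ν. -/
/-- The rank-one matrix `β ⊗ θ ∈ ℂ^{n×d}` with entries `β_i θ_j`. -/
noncomputable def tensorVec {n d : ℕ} (β : EuclideanSpace ℂ (Fin n))
    (θ : EuclideanSpace ℝ (Fin d)) : EuclideanSpace ℂ (Fin n × Fin d) :=
  (WithLp.equiv 2 _).symm fun p => β p.1 * ((θ p.2 : ℝ) : ℂ)

/-- The matrix-vector product `M θ ∈ ℂⁿ` for `M ∈ ℂ^{n×d}`, `θ ∈ ℝ^d`. -/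
noncomputable def matVec {n d : ℕ} (M : EuclideanSpace ℂ (Fin n × Fin d))
    (θ : EuclideanSpace ℝ (Fin d)) : EuclideanSpace ℂ (Fin n) :=
  (WithLp.equiv 2 _).symm fun i => ∑ j : Fin d, M (i, j) * ((θ j : ℝ) : ℂ)

theorem inner_matVec {n d : ℕ} (M : EuclideanSpace ℂ (Fin n × Fin d))
    (θ : EuclideanSpace ℝ (Fin d)) (x : EuclideanSpace ℂ (Fin n)) :
    (inner ℂ (matVec M θ) x : ℂ) = inner ℂ M (tensorVec x θ) := by
  simp only [matVec, tensorVec, PiLp.inner_apply, Fintype.sum_prod_type]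
  refine Finset.sum_congr rfl fun i _ => ?_
  simp [Finset.mul_sum]
  refine Finset.sum_congr rfl fun j _ => ?_
  ring

theorem norm_tensorVec {n d : ℕ} (x : EuclideanSpace ℂ (Fin n))
    (θ : EuclideanSpace ℝ (Fin d)) : ‖tensorVec x θ‖ = ‖x‖ * ‖θ‖ := by
  have h : ‖tensorVec x θ‖ ^ 2 = (‖x‖ * ‖θ‖) ^ 2 := by
    rw [mul_pow, EuclideanSpace.norm_sq_eq, EuclideanSpace.norm_sq_eq, EuclideanSpace.norm_sq_eq,
      Finset.sum_mul_sum, Fintype.sum_prod_type]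
    refine Finset.sum_congr rfl fun i _ => Finset.sum_congr rfl fun j _ => ?_
    simp [tensorVec, mul_pow]
  exact (pow_left_inj₀ (norm_nonneg _) (by positivity) two_ne_zero).1 h

theorem tensorVec_sub {n d : ℕ} (x y : EuclideanSpace ℂ (Fin n))
    (θ : EuclideanSpace ℝ (Fin d)) : tensorVec (x - y) θ = tensorVec x θ - tensorVec y θ := by
  ext p
  simp [tensorVec, sub_mul]

theorem matVec_sub {n d : ℕ} (M N : EuclideanSpace ℂ (Fin n × Fin d))
    (θ : EuclideanSpace ℝ (Fin d)) : matVec (M - N) θ = matVec M θ - matVec N θ := by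
  ext p
  simp [matVec, sub_mul]

theorem re_inner_smul_matVec {n d : ℕ} (ε : ℝ) (M : EuclideanSpace ℂ (Fin n × Fin d))
    (θ : EuclideanSpace ℝ (Fin d)) (x : EuclideanSpace ℂ (Fin n)) :
    (inner ℂ (((ε : ℂ)⁻¹ ^ 2) • matVec M θ) x : ℂ).re
      = ε⁻¹ ^ 2 * (inner ℂ M (tensorVec x θ) : ℂ).re := by
  have h : ((ε : ℂ)⁻¹ ^ 2) = ((ε⁻¹ ^ 2 : ℝ) : ℂ) := by push_cast; rfl
  rw [h, inner_smul_left, inner_matVec, Complex.conj_ofReal, Complex.re_ofReal_mul]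

theorem coercive_aux {n d : ℕ} (ν : ℝ)
    (a : EuclideanSpace ℂ (Fin n × Fin d) →L[ℂ] EuclideanSpace ℂ (Fin n × Fin d))
    (ha : ∀ X : EuclideanSpace ℂ (Fin n × Fin d), ν * ‖X‖ ^ 2 ≤ (inner ℂ (a X) X : ℂ).re)
    (m : EuclideanSpace ℂ (Fin n) →L[ℂ] EuclideanSpace ℂ (Fin n))
    (hm : ∀ β : EuclideanSpace ℂ (Fin n), ν * ‖β‖ ^ 2 ≤ (inner ℂ (m β) β : ℂ).re)
    (θ : EuclideanSpace ℝ (Fin d)) (ε : ℝ) (x g : EuclideanSpace ℂ (Fin n))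
    (h : ((ε : ℂ)⁻¹ ^ 2) • matVec (a (tensorVec x θ)) θ + m x = g) :
    ν * (1 + (‖θ‖ * ε⁻¹) ^ 2) * ‖x‖ ^ 2 ≤ (inner ℂ g x : ℂ).re := by
  rw [← h, inner_add_left, Complex.add_re, re_inner_smul_matVec]
  have h1 := mul_le_mul_of_nonneg_left (ha (tensorVec x θ)) (sq_nonneg ε⁻¹)
  rw [norm_tensorVec] at h1
  have h2 := hm x
  nlinarith

theorem le_of_mul_sq_le {A B x : ℝ} (hx : 0 ≤ x) (hB : 0 ≤ B) (h : A * x ^ 2 ≤ B * x) :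
    A * x ≤ B := by
  rcases hx.eq_or_lt with rfl | hx
  · simpa using hB
  · exact le_of_mul_le_mul_right (by nlinarith) hx

/-- **Stability of the limit fibre problem under perturbation of the
coefficient.**  Let `a_θ, a₀` be coercive linear maps on `ℂ^{n×d}` and `m` a coercive linear
map on `ℂⁿ`, all with constant `ν > 0`, and suppose `‖a₀ − a_θ‖ ≤ κ₀ |θ|`.  If
`ε⁻² a_θ(β ⊗ θ) θ + m β = f` and `ε⁻² a₀(β' ⊗ θ) θ + m β' = f`, then
`‖β − β'‖ ≤ C ε ‖f‖` with `C = κ₀ · sup_{t ≥ 0} t³/(ν² (1 + t²)²)`. -/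
theorem statement18
    (n d : ℕ) (hn : 1 ≤ n) (hd : 1 ≤ d)
    (ν : ℝ) (hν : 0 < ν) (κ₀ : ℝ) (hκ₀ : 0 ≤ κ₀)
    (aθ a₀ : EuclideanSpace ℂ (Fin n × Fin d) →L[ℂ] EuclideanSpace ℂ (Fin n × Fin d))
    (haθ : ∀ X : EuclideanSpace ℂ (Fin n × Fin d), ν * ‖X‖ ^ 2 ≤ (inner ℂ (aθ X) X : ℂ).re)
    (ha₀ : ∀ X : EuclideanSpace ℂ (Fin n × Fin d), ν * ‖X‖ ^ 2 ≤ (inner ℂ (a₀ X) X : ℂ).re)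
    (m : EuclideanSpace ℂ (Fin n) →L[ℂ] EuclideanSpace ℂ (Fin n))
    (hm : ∀ β : EuclideanSpace ℂ (Fin n), ν * ‖β‖ ^ 2 ≤ (inner ℂ (m β) β : ℂ).re)
    (θ : EuclideanSpace ℝ (Fin d)) (ε : ℝ) (hε : 0 < ε)
    (hper : ‖a₀ - aθ‖ ≤ κ₀ * ‖θ‖)
    (β β' f : EuclideanSpace ℂ (Fin n))
    (heqθ : ((ε : ℂ)⁻¹ ^ 2) • matVec (aθ (tensorVec β θ)) θ + m β = f)
    (heq₀ : ((ε : ℂ)⁻¹ ^ 2) • matVec (a₀ (tensorVec β' θ)) θ + m β' = f) :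
    ‖β - β'‖
      ≤ (κ₀ * ⨆ t : Set.Ici (0 : ℝ), (t : ℝ) ^ 3 / (ν ^ 2 * (1 + (t : ℝ) ^ 2) ^ 2))
          * ε * ‖f‖ := by
  have hw : ((ε : ℂ)⁻¹ ^ 2) • matVec (aθ (tensorVec (β - β') θ)) θ + m (β - β')
      = ((ε : ℂ)⁻¹ ^ 2) • matVec ((a₀ - aθ) (tensorVec β' θ)) θ := by
    rw [tensorVec_sub, map_sub, map_sub, matVec_sub, ContinuousLinearMap.sub_apply, matVec_sub,
      smul_sub, smul_sub]
    rw [← heq₀] at heqθ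
    have := sub_eq_zero.2 heqθ
    rw [← sub_eq_zero, ← this]
    abel
  set t := ‖θ‖ * ε⁻¹ with ht
  have ht0 : 0 ≤ t := by positivity
  have hθ : ‖θ‖ = t * ε := by rw [ht]; field_simp
  have h1 := coercive_aux ν aθ haθ m hm θ ε _ _ hw
  have h2 := coercive_aux ν a₀ ha₀ m hm θ ε _ _ heq₀
  rw [re_inner_smul_matVec] at h1
  have h3 : (inner ℂ f β' : ℂ).re ≤ ‖f‖ * ‖β'‖ := re_inner_le_norm (𝕜 := ℂ) f β'
  have h4 : (inner ℂ ((a₀ - aθ) (tensorVec β' θ)) (tensorVec (β - β') θ) : ℂ).re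
      ≤ (κ₀ * ‖θ‖ * (‖β'‖ * ‖θ‖)) * (‖β - β'‖ * ‖θ‖) := by
    refine (re_inner_le_norm (𝕜 := ℂ) _ _).trans ?_
    rw [norm_tensorVec]
    gcongr
    refine (ContinuousLinearMap.le_opNorm _ _).trans ?_
    rw [norm_tensorVec]
    gcongr
  have h5 : ν * (1 + t ^ 2) * ‖β'‖ ≤ ‖f‖ :=
    le_of_mul_sq_le (norm_nonneg _) (norm_nonneg _) (h2.trans h3)
  have h6 : ν * (1 + t ^ 2) * ‖β - β'‖ ≤ κ₀ * ε * t ^ 3 * ‖β'‖ := by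
    refine le_of_mul_sq_le (norm_nonneg _) (by positivity) (h1.trans ?_)
    refine (mul_le_mul_of_nonneg_left h4 (sq_nonneg _)).trans (le_of_eq ?_)
    rw [hθ]
    field_simp
  have hbdd : BddAbove (Set.range fun t : Set.Ici (0 : ℝ) =>
      (t : ℝ) ^ 3 / (ν ^ 2 * (1 + (t : ℝ) ^ 2) ^ 2)) := by
    refine ⟨1 / ν ^ 2, ?_⟩
    rintro _ ⟨⟨s, hs⟩, rfl⟩
    have hs : 0 ≤ s := hs
    show s ^ 3 / (ν ^ 2 * (1 + s ^ 2) ^ 2) ≤ 1 / ν ^ 2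
    rw [div_le_div_iff₀ (by positivity) (by positivity)]
    have : s ^ 3 ≤ (1 + s ^ 2) ^ 2 := by
      nlinarith [sq_nonneg (s ^ 2 - s), sq_nonneg (s ^ 2), sq_nonneg s]
    nlinarith [mul_le_mul_of_nonneg_left this (sq_nonneg ν)]
  have h7 := le_ciSup hbdd ⟨t, ht0⟩
  have h8 : ‖β - β'‖ ≤ (κ₀ * (t ^ 3 / (ν ^ 2 * (1 + t ^ 2) ^ 2))) * ε * ‖f‖ := by
    have hA : 0 < ν * (1 + t ^ 2) := by positivity
    have e : (κ₀ * (t ^ 3 / (ν ^ 2 * (1 + t ^ 2) ^ 2))) * ε * ‖f‖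
        = (κ₀ * ε * t ^ 3 * ‖f‖) / (ν * (1 + t ^ 2)) ^ 2 := by
      field_simp
    rw [e, le_div_iff₀ (by positivity)]
    have h9 := mul_le_mul_of_nonneg_left h6 hA.le
    have h10 := mul_le_mul_of_nonneg_left h5 (show 0 ≤ κ₀ * ε * t ^ 3 by positivity)
    linarith
  refine h8.trans ?_
  gcongr
end
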